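/- Let T > 0, let g satisfy (g1), be regularly oscillating at zero, and satisfy lim_{s→0⁺} g(s)/s = 0 and liminf_{s→+∞} g(s)/s > 0. Let a ∈ L¹([0,T]) satisfy (a1) and (a2). Then there exists ν* > 0 such that for every ν > ν* the equation u'' + ν a(x) g(u) = 0 has at least one positive solution satisfying the Neumann boundary conditions and at least one positive solution satisfying the periodic boundary conditions. -/

import Mathlib

open MeasureTheory Set Filter

/-- `u` (with derivative `u'`) is a C¹ solution of `u'' + f(x) = 0` on `[0,T]`:
`u'` is absolutely continuous and the equation holds a.e., expressed via the
integral equation `u'(x) = u'(0) − ∫₀ˣ f(t) dt`. -/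
def IsSolOn (T : ℝ) (f : ℝ → ℝ) (u u' : ℝ → ℝ) : Prop :=
  (∀ x ∈ Icc (0:ℝ) T, HasDerivWithinAt u (u' x) (Icc (0:ℝ) T) x) ∧
  ContinuousOn u' (Icc (0:ℝ) T) ∧
  ∀ x ∈ Icc (0:ℝ) T, u' x = u' 0 - ∫ t in (0:ℝ)..x, f t

/-- The equation `u'' + a(x) g(u) = 0` on `[0,T]` has a positive solution
satisfying the Neumann boundary conditions. -/
def PosSolNeumann (T : ℝ) (a g : ℝ → ℝ) : Prop :=
  ∃ u u' : ℝ → ℝ, IsSolOn T (fun t => a t * g (u t)) u u' ∧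
    (∀ x ∈ Icc (0:ℝ) T, 0 < u x) ∧ u' 0 = 0 ∧ u' T = 0

/-- The equation `u'' + a(x) g(u) = 0` on `[0,T]` has a positive solution
satisfying the periodic boundary conditions. -/
def PosSolPeriodic (T : ℝ) (a g : ℝ → ℝ) : Prop :=
  ∃ u u' : ℝ → ℝ, IsSolOn T (fun t => a t * g (u t)) u u' ∧
    (∀ x ∈ Icc (0:ℝ) T, 0 < u x) ∧ u 0 = u T ∧ u' 0 = u' T

/-- Condition (g1): `g : [0,∞) → [0,∞)` is continuous, `g 0 = 0`, `g > 0` on `(0,∞)`. -/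
def CondG1 (g : ℝ → ℝ) : Prop :=
  ContinuousOn g (Ici (0:ℝ)) ∧ (∀ s : ℝ, 0 ≤ s → 0 ≤ g s) ∧ g 0 = 0 ∧
    ∀ s : ℝ, 0 < s → 0 < g s

/-- `g` is regularly oscillating at zero. -/
def RegOscAtZero (g : ℝ → ℝ) : Prop :=
  ∀ ε : ℝ, 0 < ε → ∃ δ > (0:ℝ), ∃ η > (0:ℝ), ∀ s ω : ℝ,
    0 < s → s < δ → |ω - 1| < η → |g (ω * s) / g s - 1| < ε

/-- `liminf_{s → +∞} g(s)/s`, computed in `EReal`. -/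
noncomputable def GrowthLiminf (g : ℝ → ℝ) : EReal :=
  liminf (fun s : ℝ => ((g s / s : ℝ) : EReal)) atTop

/-- `limsup_{s → +∞} g(s)/s`, computed in `EReal`. -/
noncomputable def GrowthLimsup (g : ℝ → ℝ) : EReal :=
  limsup (fun s : ℝ => ((g s / s : ℝ) : EReal)) atTop

/-- Condition (a1): there are `m ≥ 1` pairwise disjoint closed intervals in `[0,T]`
on which `a ≥ 0` a.e. and `a` is not a.e. zero, while `a ≤ 0` a.e. outside them. -/
def CondA1 (T : ℝ) (a : ℝ → ℝ) : Prop :=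
  ∃ (m : ℕ) (σ τ : Fin m → ℝ), 0 < m ∧
    (∀ i, 0 ≤ σ i ∧ σ i ≤ τ i ∧ τ i ≤ T) ∧
    (Pairwise fun i j => Disjoint (Icc (σ i) (τ i)) (Icc (σ j) (τ j))) ∧
    (∀ i, ∀ᵐ x ∂(volume.restrict (Icc (σ i) (τ i))), 0 ≤ a x) ∧
    (∀ i, ¬ (∀ᵐ x ∂(volume.restrict (Icc (σ i) (τ i))), a x = 0)) ∧
    (∀ᵐ x ∂(volume.restrict (Icc (0:ℝ) T \ ⋃ i, Icc (σ i) (τ i))), a x ≤ 0)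

/-! A solution of the boundary value problem is a fixed point of `u ↦ u 0 + ∫ f + G f`, where
`f t = b t * g (u t)` with `b = ν a`, and `G f` solves the boundary value problem with source `f`
and `G f 0 = 0` when `∫ f = 0`.

Small nontrivial solutions do not exist: since `g s = o(s)`, such a solution is nearly constant
relative to its maximum `M`, so by regular oscillation `∫ b g(u) ≈ g(M) ∫ b < 0`, whereas the
boundary condition forces this integral to vanish. Multiplying the source by `c ∈ (0, 1]` keeps this
argument valid and, as `c → 0`, leaves a one-dimensional problem whose degree is read off from the
sign of `∫ b`. For large `ν`, concavity on the intervals where `a ≥ 0` bounds all solutions, even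
after a source `α ≥ 0` is added there, and excludes them for large `α`. So the fixed point index is
nonzero on a small ball and zero on a large one, which gives a solution in between.

Instead of an index, a single Schauder fixed point problem is solved in which the norm of `u` is the
homotopy parameter. The maximum principle makes fixed points nonnegative, and a uniqueness
argument at a zero makes them positive.
-/

section DeterminantPolynomial

open Polynomial

variable {K V : Type*} [Field K] [AddCommGroup V] [Module K V] [FiniteDimensional K V]

lemma exists_natDegree_le_eval_eq_det_one_add_smul (A : V →ₗ[K] V) :
    ∃ p : K[X], p.natDegree ≤ Module.finrank K V ∧
      ∀ t, p.eval t = LinearMap.det (1 + t • A) := by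
  set b := Module.finBasis K V
  set M := LinearMap.toMatrix b b A
  refine ⟨((X : K[X]) • M.map C + (1 : Matrix _ _ K).map C).det, ?_, fun t => ?_⟩
  · simpa using natDegree_det_X_add_C_le M 1
  · calc _ = (t • M + 1).det := by
          rw [← coe_evalRingHom, RingHom.map_det]
          congr 1
          ext i j
          simp only [Matrix.add_apply, Matrix.smul_apply, Matrix.map_apply, Matrix.one_apply,
            RingHom.mapMatrix_apply, smul_eq_mul]
          split_ifs <;> simp [mul_comm t]
      _ = (LinearMap.toMatrix b b (1 + t • A)).det := by
          rw [map_add, map_smul, LinearMap.toMatrix_one, add_comm]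
      _ = _ := LinearMap.det_toMatrix b _

lemma det_one_add_eq_sum_lagrange [DecidableEq K] (A : V →ₗ[K] V) {s : Finset K}
    (hs : Module.finrank K V < s.card) :
    LinearMap.det (1 + A) =
      ∑ t ∈ s, (Lagrange.basis s id t).eval 1 * LinearMap.det (1 + t • A) := by
  obtain ⟨p, hdeg, hp⟩ := exists_natDegree_le_eval_eq_det_one_add_smul A
  have hlt : p.degree < s.card :=
    degree_le_natDegree.trans_lt (by exact_mod_cast hdeg.trans_lt hs)
  calc LinearMap.det (1 + A) = p.eval 1 := by rw [hp, one_smul]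
    _ = (Lagrange.interpolate s id fun t => p.eval t).eval 1 :=
        congrArg (eval 1) (Lagrange.eq_interpolate (Function.injective_id.injOn) hlt)
    _ = _ := by
        rw [Lagrange.interpolate_apply, eval_finsetSum]
        exact Finset.sum_congr rfl fun t _ => by rw [eval_mul, eval_C, hp, mul_comm]

end DeterminantPolynomial

section BallVolume

open Metric

lemma image_ball_eq_of_eqOn_sphere {E : Type*} [NormedAddCommGroup E] [NormedSpace ℝ E]
    [ProperSpace E] {f : E → E} {R : ℝ} (hR : 0 < R) (hf : ContinuousOn f (closedBall 0 R))
    (hopen : IsOpen (f '' ball 0 R))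
    (hmaps : MapsTo f (closedBall 0 R) (closedBall 0 R)) (hfix : EqOn f id (sphere 0 R)) :
    f '' ball 0 R = ball 0 R := by
  have hsub : f '' ball 0 R ⊆ ball 0 R := by
    rw [← interior_closedBall (0 : E) hR.ne'] at hopen ⊢
    exact interior_maximal ((image_mono interior_subset).trans hmaps.image_subset) hopen
  refine hsub.antisymm <|
    (convex_ball (0 : E) R).isPreconnected.subset_of_closure_inter_subset hopen ?_ ?_
  · have hmem := mem_image_of_mem f (mem_ball_self (x := (0 : E)) hR)
    exact ⟨f 0, hsub hmem, hmem⟩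
  · rintro y ⟨hy, hyball⟩
    have hclosed : IsClosed (f '' closedBall 0 R) :=
      ((isCompact_closedBall 0 R).image_of_continuousOn hf).isClosed
    obtain ⟨x, hx, rfl⟩ := closure_minimal (image_mono ball_subset_closedBall) hclosed hy
    rw [← ball_union_sphere] at hx
    rcases hx with hx | hx
    · exact mem_image_of_mem f hx
    · rw [hfix hx] at hyball ⊢
      exact absurd hyball (sphere_disjoint_ball.notMem_of_mem_left hx)

variable {E : Type*} [NormedAddCommGroup E] [NormedSpace ℝ E] [FiniteDimensional ℝ E]

lemma det_pos_of_norm_sub_one_lt {A : E →L[ℝ] E} (hA : ‖A - 1‖ < 1) : 0 < A.det := by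
  set path : ℝ → E →L[ℝ] E := fun s => 1 - s • (1 - A) with hpath
  have det_ne_zero : ∀ s ∈ Icc (0 : ℝ) 1, (path s).det ≠ 0 := by
    intro s hs
    have hsmall : ‖s • (1 - A)‖ < 1 := by
      rw [norm_smul, norm_sub_rev, Real.norm_of_nonneg hs.1]
      exact (mul_le_of_le_one_left (norm_nonneg _) hs.2).trans_lt hA
    have hunit := (isUnit_one_sub_of_norm_lt_one hsmall).map
      (ContinuousLinearMap.toLinearMapRingHom (R₁ := ℝ) (M₁ := E))
    exact (hunit.map LinearMap.det).ne_zero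
  have hcont : Continuous fun s => (path s).det :=
    ContinuousLinearMap.continuous_det.comp (by fun_prop)
  have hA_eq : A = path 1 := by simp [hpath]
  rw [hA_eq]
  by_contra! hle
  have hone : (path 0).det = 1 := by simp [hpath, ContinuousLinearMap.det]
  obtain ⟨s, hs, h⟩ := intermediate_value_Icc' zero_le_one hcont.continuousOn
    (show (0 : ℝ) ∈ Icc _ _ from ⟨hle, hone ▸ zero_le_one⟩)
  exact det_ne_zero s hs h

variable [MeasurableSpace E] [BorelSpace E] (μ : Measure E) [μ.IsAddHaarMeasure]

lemma setIntegral_det_fderiv_of_norm_fderiv_sub_one_le {f : E → E} (hf : ContDiff ℝ 1 f)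
    {R c : ℝ} (hR : 0 < R) (hc : c < 1) (hder : ∀ x ∈ closedBall 0 R, ‖fderiv ℝ f x - 1‖ ≤ c)
    (hmaps : MapsTo f (closedBall 0 R) (closedBall 0 R)) (hfix : EqOn f id (sphere 0 R)) :
    ∫ x in ball 0 R, (fderiv ℝ f x).det ∂μ = μ.real (ball 0 R) := by
  have hdet : ∀ x ∈ ball (0 : E) R, 0 < (fderiv ℝ f x).det := fun x hx =>
    det_pos_of_norm_sub_one_lt ((hder x (ball_subset_closedBall hx)).trans_lt hc)
  have hinj : InjOn f (ball 0 R) := by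
    intro x hx y hy hxy
    have hlip := (convex_closedBall (0 : E) R).norm_image_sub_le_of_norm_fderiv_le'
      (fun z _ => (hf.differentiable one_ne_zero) z) hder
      (ball_subset_closedBall hy) (ball_subset_closedBall hx)
    rw [hxy, sub_self, zero_sub, norm_neg, one_apply_eq_self] at hlip
    have hzero : ‖x - y‖ = 0 := by nlinarith [norm_nonneg (x - y)]
    exact sub_eq_zero.mp (norm_eq_zero.mp hzero)
  have hopen : IsOpen (f '' ball 0 R) := by
    rw [isOpen_iff_mem_nhds]
    rintro _ ⟨x, hx, rfl⟩
    have hstrict := (hf.contDiffAt (x := x)).hasStrictFDerivAt one_ne_zero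
    have hunit : IsUnit (fderiv ℝ f x : E →ₗ[ℝ] E) :=
      (LinearMap.isUnit_iff_isUnit_det _).mpr (hdet x hx).ne'.isUnit
    rw [← hstrict.map_nhds_eq_of_surj ((LinearMap.isUnit_iff_range_eq_top _).mp hunit)]
    exact image_mem_map (isOpen_ball.mem_nhds hx)
  have hcv := integral_image_eq_integral_abs_det_fderiv_smul μ isOpen_ball.measurableSet
    (fun x _ => ((hf.differentiable one_ne_zero) x).hasFDerivAt.hasFDerivWithinAt) hinj
    (fun _ => (1 : ℝ))
  rw [image_ball_eq_of_eqOn_sphere hR hf.continuous.continuousOn hopen hmaps hfix] at hcv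
  simp only [integral_const, smul_eq_mul, mul_one, measureReal_restrict_apply_univ] at hcv
  rw [hcv]
  exact setIntegral_congr_fun isOpen_ball.measurableSet fun x hx => (abs_of_pos (hdet x hx)).symm

/- The integral of `det (1 + t (Df - 1))` is a polynomial in `t` which equals the volume of the ball
for small `t > 0`, hence also for `t = 1`; Lagrange interpolation at small nodes makes this
explicit. -/
lemma setIntegral_det_fderiv_of_eqOn_sphere {f : E → E} (hf : ContDiff ℝ 1 f) {R : ℝ}
    (hR : 0 < R) (hmaps : MapsTo f (closedBall 0 R) (closedBall 0 R))
    (hfix : EqOn f id (sphere 0 R)) :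
    ∫ x in ball 0 R, (fderiv ℝ f x).det ∂μ = μ.real (ball 0 R) := by
  set A : E → E →L[ℝ] E := fun x => fderiv ℝ f x - 1
  have hAcont : Continuous A := (hf.continuous_fderiv one_ne_zero).sub continuous_const
  obtain ⟨C, hC⟩ :=
    (isCompact_closedBall (0 : E) R).exists_bound_of_continuousOn hAcont.continuousOn
  have hC0 : 0 ≤ C := (norm_nonneg _).trans (hC 0 (mem_closedBall_self hR.le))
  have hsmall : ∀ t ∈ Ioo 0 (1 / (C + 1)),
      ∫ x in ball 0 R, (1 + t • A x).det ∂μ = μ.real (ball 0 R) := by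
    rintro t ⟨ht0, ht⟩
    have htC : t * (C + 1) < 1 := by rwa [lt_div_iff₀ (by positivity)] at ht
    set h : E → E := fun x => x + t • (f x - x) with hh
    have hder : ∀ x, fderiv ℝ h x = 1 + t • A x := fun x =>
      ((hasFDerivAt_id x).add ((((hf.differentiable one_ne_zero) x).hasFDerivAt.sub
        (hasFDerivAt_id x)).const_smul t)).fderiv
    simp_rw [← hder]
    refine setIntegral_det_fderiv_of_norm_fderiv_sub_one_le μ
      (by fun_prop) hR (c := t * C) (by nlinarith) (fun x hx => ?_) (fun x hx => ?_)
      (fun x hx => by simp [hh, hfix hx])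
    · rw [hder, add_sub_cancel_left, norm_smul, Real.norm_of_nonneg ht0.le]
      gcongr
      exact hC x hx
    · exact (convex_closedBall 0 R).add_smul_sub_mem hx (hmaps hx) ⟨ht0.le, by nlinarith⟩
  obtain ⟨s, hs, hcard⟩ := (Ioo_infinite (show 0 < 1 / (C + 1) by positivity)).exists_subset_card_eq
    (Module.finrank ℝ E + 1)
  have hint : ∀ t ∈ s, Integrable (fun x => (Lagrange.basis s id t).eval 1 * (1 + t • A x).det)
      (μ.restrict (ball 0 R)) := fun t _ =>
    ((continuous_const.mul (ContinuousLinearMap.continuous_det.comp (by fun_prop))).continuousOn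
      |>.integrableOn_compact (isCompact_closedBall 0 R)).mono_set ball_subset_closedBall
  have hdet : ∀ x, (fderiv ℝ f x).det
      = ∑ t ∈ s, (Lagrange.basis s id t).eval 1 * (1 + t • A x).det := fun x => by
    rw [← add_sub_cancel 1 (fderiv ℝ f x)]
    exact det_one_add_eq_sum_lagrange (s := s) (A x : E →ₗ[ℝ] E) (by omega)
  have hsum : ∑ t ∈ s, (Lagrange.basis s id t).eval 1 = 1 := by
    rw [← Polynomial.eval_finsetSum, Lagrange.sum_basis Function.injective_id.injOn
      (Finset.card_pos.mp (by omega)), Polynomial.eval_one]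
  simp_rw [hdet]
  rw [integral_finsetSum s hint]
  simp_rw [integral_const_mul]
  rw [Finset.sum_congr rfl fun t ht => by rw [hsmall t (hs ht)], ← Finset.sum_mul, hsum, one_mul]

end BallVolume

section Brouwer

open Metric

section InnerProductSpace

variable {E : Type*} [NormedAddCommGroup E] [InnerProductSpace ℝ E] [FiniteDimensional ℝ E]

lemma det_fderiv_eq_zero_of_norm_eventuallyEq {f : E → E} {x : E} {R : ℝ} (hR : R ≠ 0)
    (hf : DifferentiableAt ℝ f x) (hnorm : ∀ᶠ y in nhds x, ‖f y‖ = R) :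
    (fderiv ℝ f x).det = 0 := by
  have orthogonal : ∀ w, inner ℝ (f x) (fderiv ℝ f x w) = 0 := by
    have hconst : HasFDerivAt (fun y => ‖f y‖ ^ 2) (0 : E →L[ℝ] ℝ) x :=
      (hasFDerivAt_const (R ^ 2) x).congr_of_eventuallyEq
        (hnorm.mono fun y hy => congrArg (· ^ 2) hy)
    intro w
    simpa using DFunLike.congr_fun (hf.hasFDerivAt.norm_sq.unique hconst) w
  by_contra hdet
  have hunit : IsUnit (fderiv ℝ f x : E →ₗ[ℝ] E) :=
    (LinearMap.isUnit_iff_isUnit_det _).mpr (IsUnit.mk0 _ hdet)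
  obtain ⟨w, hw⟩ := LinearMap.range_eq_top.mp ((LinearMap.isUnit_iff_range_eq_top _).mp hunit) (f x)
  have hself := orthogonal w
  rw [show fderiv ℝ f x w = f x from hw, inner_self_eq_zero] at hself
  exact hR (by rw [← hnorm.self_of_nhds, hself, norm_zero])

lemma not_exists_contDiff_retraction_sphere {R : ℝ} (hR : 0 < R) :
    ¬ ∃ f : E → E, ContDiff ℝ 1 f ∧ MapsTo f (closedBall 0 R) (sphere 0 R) ∧
      EqOn f id (sphere 0 R) := by
  rintro ⟨f, hf, hmaps, hfix⟩
  borelize E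
  have hvolume := setIntegral_det_fderiv_of_eqOn_sphere volume hf hR
    (hmaps.mono_right sphere_subset_closedBall) hfix
  have hdet : ∀ x ∈ ball (0 : E) R, (fderiv ℝ f x).det = 0 := fun x hx =>
    det_fderiv_eq_zero_of_norm_eventuallyEq hR.ne' ((hf.differentiable one_ne_zero) x) <| by
      filter_upwards [isOpen_ball.mem_nhds hx] with y hy
      exact mem_sphere_zero_iff_norm.mp (hmaps (ball_subset_closedBall hy))
  rw [setIntegral_congr_fun isOpen_ball.measurableSet hdet, integral_zero] at hvolume
  exact (ENNReal.toReal_pos (measure_ball_pos volume (0 : E) hR).ne' measure_ball_lt_top.ne).ne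
    hvolume

lemma exists_fixedPoint_of_eq_zero_off_ball {Ψ : E → E} (hΨ : Continuous Ψ) {R : ℝ} (hR : 0 < R)
    (hzero : ∀ x, R ≤ ‖x‖ → Ψ x = 0) : ∃ x, Ψ x = x := by
  by_contra! hno
  obtain ⟨ε, hε, hdist⟩ : ∃ ε > 0, ∀ x, ε ≤ ‖x - Ψ x‖ := by
    obtain ⟨y, -, hy⟩ := (isCompact_closedBall (0 : E) R).exists_isMinOn
      ⟨0, mem_closedBall_self hR.le⟩ (f := fun x => ‖x - Ψ x‖) (by fun_prop)
    refine ⟨min R ‖y - Ψ y‖, lt_min hR (norm_pos_iff.mpr (sub_ne_zero.mpr (hno y).symm)), ?_⟩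
    intro x
    rcases le_total R ‖x‖ with hx | hx
    · simpa [hzero x hx] using Or.inl hx
    · exact (min_le_right _ _).trans (hy (mem_closedBall_zero_iff.mpr hx))
  obtain ⟨Ψ', hsmooth, hclose, hsupp⟩ := hΨ.exists_contDiff_approx 1 (ε := fun _ => ε)
    continuous_const (fun _ => hε)
  set φ : E → E := fun x => x - Ψ' x
  have hφ_smooth : ContDiff ℝ 1 φ := contDiff_id.sub hsmooth
  have hφ_ne : ∀ x, φ x ≠ 0 := by
    intro x hx
    have hlt := hclose x
    rw [dist_eq_norm, ← sub_eq_zero.mp hx] at hlt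
    exact (hdist x).not_gt hlt
  have hφ_sphere : ∀ x ∈ sphere 0 R, φ x = x := by
    intro x hx
    have hx0 : Ψ x = 0 := hzero x (mem_sphere_zero_iff_norm.mp hx).ge
    have hx' : Ψ' x = 0 := by_contra fun hne => hsupp hne hx0
    exact sub_eq_self.mpr hx'
  refine not_exists_contDiff_retraction_sphere hR
    ⟨fun x => (R / ‖φ x‖) • φ x, ?_, fun x _ => ?_, fun x hx => ?_⟩
  · exact (contDiff_const.div (hφ_smooth.norm ℝ hφ_ne) fun x => norm_ne_zero_iff.mpr (hφ_ne x)).smul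
      hφ_smooth
  · rw [mem_sphere_zero_iff_norm, norm_smul, norm_div, norm_norm, Real.norm_of_nonneg hR.le,
      div_mul_cancel₀ _ (norm_ne_zero_iff.mpr (hφ_ne x))]
  · simp [hφ_sphere x hx, mem_sphere_zero_iff_norm.mp hx, hR.ne']

end InnerProductSpace

/-- The truncation of a real number to `[0, 1]`, used to build cut-offs and piecewise affine
homotopy parameters. -/
noncomputable def unitClamp (s : ℝ) : ℝ := max 0 (min 1 s)

lemma continuous_unitClamp : Continuous unitClamp := by unfold unitClamp; fun_prop

lemma unitClamp_mem_Icc (s : ℝ) : unitClamp s ∈ Icc (0 : ℝ) 1 :=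
  ⟨le_max_left _ _, max_le zero_le_one (min_le_left _ _)⟩

lemma unitClamp_of_nonpos {s : ℝ} (hs : s ≤ 0) : unitClamp s = 0 :=
  max_eq_left ((min_le_right _ _).trans hs)

lemma unitClamp_pos {s : ℝ} (hs : 0 < s) : 0 < unitClamp s :=
  lt_max_of_lt_right (lt_min one_pos hs)

lemma unitClamp_of_one_le {s : ℝ} (hs : 1 ≤ s) : unitClamp s = 1 := by
  rw [unitClamp, min_eq_left hs, max_eq_right zero_le_one]

theorem exists_fixedPoint_of_finiteDimensional {V : Type*} [NormedAddCommGroup V] [NormedSpace ℝ V]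
    [FiniteDimensional ℝ V] {Ψ : V → V} (hΨ : Continuous Ψ) {M : ℝ} (hM : ∀ x, ‖Ψ x‖ ≤ M) :
    ∃ x, Ψ x = x := by
  let e : V ≃L[ℝ] EuclideanSpace ℝ (Fin (Module.finrank ℝ V)) :=
    ContinuousLinearEquiv.ofFinrankEq (by simp)
  have hM0 : 0 ≤ M := (norm_nonneg _).trans (hM 0)
  set L := ‖(e : V →L[ℝ] EuclideanSpace ℝ (Fin (Module.finrank ℝ V)))‖
  set cutoff : EuclideanSpace ℝ (Fin (Module.finrank ℝ V)) → ℝ :=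
    fun y => unitClamp (L * M + 1 - ‖y‖) with hcutoff
  have hcutoff_cont : Continuous cutoff := continuous_unitClamp.comp (by fun_prop)
  obtain ⟨y, hy⟩ := exists_fixedPoint_of_eq_zero_off_ball
    (Ψ := fun y => cutoff y • e (Ψ (e.symm y))) (by fun_prop) (R := L * M + 1) (by positivity)
    (fun y hy => by simp [hcutoff, unitClamp_of_nonpos (sub_nonpos.mpr hy)])
  have hnorm : ‖y‖ ≤ L * M := by
    obtain ⟨h0, h1⟩ := unitClamp_mem_Icc (L * M + 1 - ‖y‖)
    calc ‖y‖ = cutoff y * ‖e (Ψ (e.symm y))‖ := by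
          conv_lhs => rw [← hy, norm_smul, Real.norm_of_nonneg h0]
      _ ≤ ‖e (Ψ (e.symm y))‖ := mul_le_of_le_one_left (norm_nonneg _) h1
      _ ≤ L * ‖Ψ (e.symm y)‖ := ContinuousLinearMap.le_opNorm e.toContinuousLinearMap _
      _ ≤ L * M := mul_le_mul_of_nonneg_left (hM _) (norm_nonneg _)
  have hone : cutoff y = 1 := unitClamp_of_one_le (by linarith)
  refine ⟨e.symm y, e.injective ?_⟩
  simpa only [hone, one_smul, e.apply_symm_apply] using hy

end Brouwer

section Schauder

open Metric

variable {X : Type*} [NormedAddCommGroup X] [NormedSpace ℝ X]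

lemma exists_continuousOn_mem_span_dist_lt {K : Set X} (hK : IsCompact K) {ε : ℝ} (hε : 0 < ε) :
    ∃ (t : Finset X) (P : X → X), ContinuousOn P K ∧
      (∀ y, P y ∈ Submodule.span ℝ (t : Set X)) ∧ ∀ y ∈ K, dist (P y) y < ε := by
  classical
  obtain ⟨t, -, ht, hcover⟩ := hK.finite_cover_balls hε
  lift t to Finset X using ht
  set weight : X → X → ℝ := fun y i => max 0 (ε - dist y i)
  have hweight_nonneg : ∀ y i, 0 ≤ weight y i := fun y i => le_max_left _ _
  have htotal : ∀ y ∈ K, 0 < ∑ i ∈ t, weight y i := by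
    intro y hy
    obtain ⟨i, hi, hyi⟩ := mem_iUnion₂.mp (hcover hy)
    exact Finset.sum_pos' (fun i _ => hweight_nonneg y i)
      ⟨i, hi, lt_max_of_lt_right (sub_pos.mpr hyi)⟩
  refine ⟨t, fun y => t.centerMass (weight y) id, ?_, fun y => ?_, fun y hy => ?_⟩
  · unfold Finset.centerMass
    refine ContinuousOn.smul (ContinuousOn.inv₀ ?_ fun y hy => (htotal y hy).ne') ?_ <;>
      exact Continuous.continuousOn (by fun_prop)
  · exact Submodule.smul_mem _ _ <| Submodule.sum_mem _ fun i hi =>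
      Submodule.smul_mem _ _ (Submodule.subset_span hi)
  · rw [← mem_ball]
    change t.centerMass (weight y) id ∈ _
    rw [← Finset.centerMass_filter_ne_zero]
    refine (convex_ball y ε).centerMass_mem (fun i _ => hweight_nonneg y i) ?_ fun i hi => ?_
    · rw [Finset.sum_filter_ne_zero]
      exact htotal y hy
    · have hpos := (hweight_nonneg y i).lt_of_ne' (Finset.mem_filter.mp hi).2
      rw [id, mem_ball, dist_comm]
      linarith [(lt_max_iff.mp hpos).resolve_left (lt_irrefl _)]

theorem exists_fixedPoint_of_mem_isCompact {Ψ : X → X} (hΨ : Continuous Ψ) {K : Set X}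
    (hK : IsCompact K) (hΨK : ∀ x, Ψ x ∈ K) : ∃ x, Ψ x = x := by
  have approx : ∀ ε > 0, ∃ x, dist (Ψ x) x < ε := by
    intro ε hε
    obtain ⟨t, P, hPcont, hPspan, hPdist⟩ := exists_continuousOn_mem_span_dist_lt hK hε
    obtain ⟨M, hM⟩ := hK.isBounded.exists_norm_le
    have hcont : Continuous fun v : Submodule.span ℝ (t : Set X) => P (Ψ v) :=
      hPcont.comp_continuous (by fun_prop) fun v => hΨK v
    have hbound : ∀ x, ‖P (Ψ x)‖ ≤ ε + M := fun x =>
      (norm_le_norm_sub_add _ (Ψ x)).trans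
        (add_le_add (by simpa [dist_eq_norm] using (hPdist _ (hΨK x)).le) (hM _ (hΨK x)))
    obtain ⟨v, hv⟩ := exists_fixedPoint_of_finiteDimensional
      (Ψ := fun v : Submodule.span ℝ (t : Set X) =>
        (⟨P (Ψ v), hPspan _⟩ : Submodule.span ℝ (t : Set X)))
      (hcont.subtype_mk _) (fun v => hbound v)
    have hPv : P (Ψ v) = v := congrArg Subtype.val hv
    exact ⟨v, by simpa only [hPv, dist_comm] using hPdist _ (hΨK v)⟩
  choose x hx using fun k : ℕ => approx (1 / ((k : ℝ) + 1)) (by positivity)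
  obtain ⟨y, -, φ, hφ, hlim⟩ := hK.tendsto_subseq fun k => hΨK (x k)
  have hdist : Tendsto (fun k => dist (Ψ (x (φ k))) (x (φ k))) atTop (nhds 0) :=
    squeeze_zero (fun _ => dist_nonneg) (fun k => (hx (φ k)).le)
      (tendsto_one_div_add_atTop_nhds_zero_nat.comp hφ.tendsto_atTop)
  have hxlim : Tendsto (fun k => x (φ k)) atTop (nhds y) := (tendsto_iff_of_dist hdist).mp hlim
  exact ⟨y, tendsto_nhds_unique ((hΨ.tendsto y).comp hxlim) hlim⟩

end Schauder

section Expansion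

open Metric

variable {X : Type*} [NormedAddCommGroup X] [NormedSpace ℝ X]

/- Schauder's theorem is applied to `u ↦ k⁻¹ • F ‖u‖ (k • u)` with `k = ρ ‖u‖ / max ‖u‖ 1`: the norm
of `u` plays the role of the parameter `s`, and `k` rescales `u` to the radius `ρ s`. -/
lemma exists_fixedPoint_of_radial_homotopy {ρ : ℝ → ℝ} (hρ : Continuous ρ) {r R S : ℝ}
    (hr : 0 < r) (hρr : ∀ s, r ≤ ρ s) (hρR : ∀ s, ρ s ≤ R) {F : ℝ → X → X}
    (hF : ContinuousOn (fun p : ℝ × X => F p.1 p.2) (univ ×ˢ closedBall 0 R))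
    {K : Set X} (hK : IsCompact K) (hFK : ∀ s, MapsTo (F s) (closedBall 0 R) K)
    (hFS : ∀ s, S ≤ s → ∀ v, F s v = 0) :
    ∃ s v, 0 ≤ s ∧ ‖v‖ ≤ ρ s ∧ (1 ≤ s → ‖v‖ = ρ s) ∧ F s v = v := by
  set k : X → ℝ := fun u => ρ ‖u‖ / max ‖u‖ 1 with hk
  have hmax : ∀ u : X, 0 < max ‖u‖ 1 := fun u => lt_max_of_lt_right one_pos
  have hkpos : ∀ u, 0 < k u := fun u => div_pos (hr.trans_le (hρr _)) (hmax u)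
  have hkcont : Continuous k :=
    (hρ.comp continuous_norm).div (by fun_prop) fun u => (hmax u).ne'
  have hknorm : ∀ u, ‖k u • u‖ = ρ ‖u‖ * (‖u‖ / max ‖u‖ 1) := fun u => by
    rw [norm_smul, Real.norm_of_nonneg (hkpos u).le, hk]
    ring
  have hkle : ∀ u, ‖k u • u‖ ≤ ρ ‖u‖ := fun u => by
    rw [hknorm]
    exact mul_le_of_le_one_right (hr.le.trans (hρr _))
      (div_le_one_of_le₀ (le_max_left _ _) (hmax u).le)
  have hkball : ∀ u, k u • u ∈ closedBall 0 R := fun u =>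
    mem_closedBall_zero_iff.mpr ((hkle u).trans (hρR _))
  have hcont : Continuous fun u => (k u)⁻¹ • F ‖u‖ (k u • u) :=
    (hkcont.inv₀ fun u => (hkpos u).ne').smul <|
      hF.comp_continuous (continuous_norm.prodMk (hkcont.smul continuous_id))
        fun u => ⟨mem_univ _, hkball u⟩
  have hcompact : IsCompact (insert 0 ((fun p : ℝ × X => p.1 • p.2) ''
      (Icc 0 (max S 1 / r) ×ˢ K))) :=
    ((isCompact_Icc.prod hK).image (by fun_prop)).insert 0
  obtain ⟨u, hu⟩ := exists_fixedPoint_of_mem_isCompact hcont hcompact fun u => by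
    rcases le_total S ‖u‖ with hS | hS
    · exact Or.inl (by rw [hFS _ hS, smul_zero])
    · refine Or.inr ⟨((k u)⁻¹, _), ⟨⟨(inv_pos.mpr (hkpos u)).le, ?_⟩, hFK _ (hkball u)⟩, rfl⟩
      rw [hk, inv_div]
      exact div_le_div₀ (by positivity) (max_le_max_right 1 hS) hr (hρr _)
  refine ⟨‖u‖, k u • u, norm_nonneg u, hkle u, fun hs => ?_, ?_⟩
  · rw [hknorm, max_eq_left hs, div_self (by positivity), mul_one]
  · exact (inv_smul_eq_iff₀ (hkpos u).ne').mp hu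

/-- The homotopy behind `exists_fixedPoint_of_expansion`, with parameter `s` from `5` down to `0`:
first `P` is switched on, then `Q`, and, after the stage `2 ≤ s ≤ 3` where only the radius changes,
the vector `a`. -/
noncomputable def expansionHomotopy (P Q : X → X) (a : X) (s : ℝ) (u : X) : X :=
  unitClamp (5 - s) • (P u + unitClamp (4 - s) • Q u + unitClamp (2 - s) • a)

lemma continuousOn_expansionHomotopy {P Q : X → X} {B : Set X} (hP : ContinuousOn P B)
    (hQ : ContinuousOn Q B) (a : X) :
    ContinuousOn (fun p : ℝ × X => expansionHomotopy P Q a p.1 p.2) (univ ×ˢ B) := by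
  have hfst : ∀ c, ContinuousOn (fun p : ℝ × X => unitClamp (c - p.1)) (univ ×ˢ B) :=
    fun c => (continuous_unitClamp.comp (by fun_prop)).continuousOn
  have hsnd : ∀ {f : X → X}, ContinuousOn f B →
      ContinuousOn (fun p : ℝ × X => f p.2) (univ ×ˢ B) :=
    fun hf => hf.comp continuousOn_snd fun p hp => hp.2
  exact (hfst 5).smul (((hsnd hP).add ((hfst 4).smul (hsnd hQ))).add
    ((hfst 2).smul continuousOn_const))

lemma exists_isCompact_mapsTo_expansionHomotopy {P Q : X → X} {B K L : Set X} (hK : IsCompact K)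
    (hP : MapsTo P B K) (hL : IsCompact L) (hQ : MapsTo Q B L) (a : X) :
    ∃ K', IsCompact K' ∧ ∀ s, MapsTo (expansionHomotopy P Q a s) B K' := by
  refine ⟨(fun p : ℝ × ℝ × ℝ × X × X =>
      p.1 • (p.2.2.2.1 + p.2.1 • p.2.2.2.2 + p.2.2.1 • a)) ''
        (Icc 0 1 ×ˢ Icc 0 1 ×ˢ Icc 0 1 ×ˢ K ×ˢ L), ?_, fun s u hu => ⟨(_, _, _, _, _),
    ⟨unitClamp_mem_Icc _, unitClamp_mem_Icc _, unitClamp_mem_Icc _, hP hu, hQ hu⟩, rfl⟩⟩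
  exact (isCompact_Icc.prod (isCompact_Icc.prod (isCompact_Icc.prod (hK.prod hL)))).image
    (by fun_prop)

theorem exists_fixedPoint_of_expansion {P Q : X → X} {r R : ℝ} (hr : 0 < r) (hrR : r < R)
    (hP : ContinuousOn P (closedBall 0 R)) (hQ : ContinuousOn Q (closedBall 0 R))
    {K L : Set X} (hK : IsCompact K) (hPK : MapsTo P (closedBall 0 R) K)
    (hL : IsCompact L) (hQL : MapsTo Q (closedBall 0 R) L) {e : X} {α₀ : ℝ} (hα₀ : 0 ≤ α₀)
    (hinner₀ : ∀ c ∈ Icc (0 : ℝ) 1, ∀ u, ‖u‖ = r → c • P u ≠ u)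
    (hinner₁ : ∀ c ∈ Ioc (0 : ℝ) 1, ∀ u, ‖u‖ = r → P u + c • Q u ≠ u)
    (houter : ∀ α : ℝ, 0 ≤ α → ∀ u, ‖u‖ = R → P u + Q u + α • e ≠ u)
    (hball : ∀ u, ‖u‖ ≤ R → P u + Q u + α₀ • e ≠ u) :
    ∃ u, r < ‖u‖ ∧ ‖u‖ < R ∧ P u + Q u = u := by
  set ρ : ℝ → ℝ := fun s => r + (R - r) * unitClamp (3 - s) with hρ
  obtain ⟨K', hK', hmaps⟩ := exists_isCompact_mapsTo_expansionHomotopy hK hPK hL hQL (α₀ • e)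
  obtain ⟨s, u, -, hle, heq, hfix⟩ := exists_fixedPoint_of_radial_homotopy (ρ := ρ) (S := 5)
    (continuous_const.add (continuous_const.mul (continuous_unitClamp.comp (by fun_prop)))) hr
    (fun s => le_add_of_nonneg_right (mul_nonneg (sub_pos.mpr hrR).le (unitClamp_mem_Icc _).1))
    (fun s => by nlinarith [(unitClamp_mem_Icc (3 - s)).2])
    (continuousOn_expansionHomotopy hP hQ (α₀ • e)) hK' hmaps (fun s hs u => by
      rw [expansionHomotopy, unitClamp_of_nonpos (sub_nonpos.mpr hs), zero_smul])
  simp only [expansionHomotopy, smul_smul, mul_comm (unitClamp (2 - s)) α₀, hρ] at hle heq hfix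
  rcases lt_or_ge 2 s with h2 | h2
  · rw [unitClamp_of_nonpos (s := 2 - s) (by linarith), mul_zero, zero_smul, add_zero] at hfix
    replace heq := heq (by linarith)
    rcases lt_or_ge s 3 with h3 | h3
    · rw [unitClamp_of_one_le (s := 5 - s) (by linarith), one_smul,
        unitClamp_of_one_le (s := 4 - s) (by linarith), one_smul] at hfix
      have hur : r < ‖u‖ := by nlinarith [unitClamp_pos (s := 3 - s) (by linarith)]
      have huR : ‖u‖ ≠ R := fun h => houter 0 le_rfl u h (by rw [zero_smul, add_zero, hfix])
      exact ⟨u, hur, lt_of_le_of_ne (by nlinarith [(unitClamp_mem_Icc (3 - s)).2]) huR, hfix⟩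
    rw [unitClamp_of_nonpos (s := 3 - s) (by linarith), mul_zero, add_zero] at heq
    rcases lt_or_ge s 4 with h4 | h4
    · rw [unitClamp_of_one_le (s := 5 - s) (by linarith), one_smul] at hfix
      exact absurd hfix (hinner₁ _ ⟨unitClamp_pos (by linarith), (unitClamp_mem_Icc _).2⟩ u heq)
    · rw [unitClamp_of_nonpos (s := 4 - s) (by linarith), zero_smul, add_zero] at hfix
      exact absurd hfix (hinner₀ _ (unitClamp_mem_Icc _) u heq)
  rw [unitClamp_of_one_le (s := 5 - s) (by linarith), one_smul,
    unitClamp_of_one_le (s := 4 - s) (by linarith), one_smul] at hfix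
  rw [unitClamp_of_one_le (s := 3 - s) (by linarith), mul_one, add_sub_cancel] at hle heq
  rcases lt_or_ge s 1 with h1 | h1
  · rw [unitClamp_of_one_le (s := 2 - s) (by linarith), mul_one] at hfix
    exact absurd hfix (hball u hle)
  · exact absurd hfix (houter _ (mul_nonneg hα₀ (unitClamp_mem_Icc _).1) u (heq h1))

end Expansion

section Calculus

lemma intervalIntegrable_of_mem_Icc {f : ℝ → ℝ} {a b x y : ℝ}
    (hf : IntervalIntegrable f volume a b) (hx : x ∈ Icc a b) (hy : y ∈ Icc a b) :
    IntervalIntegrable f volume x y :=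
  hf.mono_set (uIcc_subset_uIcc (Icc_subset_uIcc hx) (Icc_subset_uIcc hy))

lemma abs_intervalIntegral_le_of_mem_Icc {f : ℝ → ℝ} {a b x y : ℝ}
    (hf : IntervalIntegrable f volume a b) (hx : x ∈ Icc a b) (hy : y ∈ Icc a b) :
    |∫ t in x..y, f t| ≤ ∫ t in a..b, |f t| := by
  have hab : a ≤ b := hx.1.trans hx.2
  have hsub : Set.uIoc x y ⊆ Set.uIoc a b := by
    rw [uIoc_of_le hab]
    exact Ioc_subset_Ioc (le_inf hx.1 hy.1) (sup_le hx.2 hy.2)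
  calc |∫ t in x..y, f t| ≤ ∫ t in Set.uIoc x y, |f t| := by
        simpa only [Real.norm_eq_abs] using
          intervalIntegral.norm_integral_le_integral_norm_uIoc (f := f)
    _ ≤ ∫ t in Set.uIoc a b, |f t| := setIntegral_mono_set
        (intervalIntegrable_iff.mp hf.abs) (ae_of_all _ fun _ => abs_nonneg _) hsub.eventuallyLE
    _ = ∫ t in a..b, |f t| := by rw [uIoc_of_le hab, intervalIntegral.integral_of_le hab]

lemma continuousOn_intervalIntegral {f : ℝ → ℝ} {T : ℝ} (hT : 0 ≤ T)
    (hf : IntervalIntegrable f volume 0 T) :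
    ContinuousOn (fun x => ∫ t in (0 : ℝ)..x, f t) (Icc 0 T) := by
  simpa only [uIcc_of_le hT] using
    intervalIntegral.continuousOn_primitive_interval' hf left_mem_uIcc

lemma intervalIntegrable_intervalIntegral {f : ℝ → ℝ} {T : ℝ} (hT : 0 ≤ T)
    (hf : IntervalIntegrable f volume 0 T) :
    IntervalIntegrable (fun x => ∫ t in (0 : ℝ)..x, f t) volume 0 T :=
  ContinuousOn.intervalIntegrable <| by
    simpa only [uIcc_of_le hT] using continuousOn_intervalIntegral hT hf

lemma mul_sub_nonpos_of_isMaxOn {u : ℝ → ℝ} {u'x x y : ℝ} {s : Set ℝ} (hs : Convex ℝ s)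
    (hu : HasDerivWithinAt u u'x s x) (hmax : IsMaxOn u s x) (hx : x ∈ s) (hy : y ∈ s) :
    u'x * (y - x) ≤ 0 := by
  have := hmax.localize.hasFDerivWithinAt_nonpos hu.hasFDerivWithinAt
    (sub_mem_posTangentConeAt_of_segment_subset (hs.segment_subset hx hy))
  simpa [mul_comm] using this

lemma le_tangent_of_concaveOn {u : ℝ → ℝ} {u'x x y : ℝ} {s : Set ℝ} (hu : ConcaveOn ℝ s u)
    (hu' : HasDerivWithinAt u u'x s x) (hx : x ∈ s) (hy : y ∈ s) : u y ≤ u x + u'x * (y - x) := by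
  rcases lt_trichotomy x y with hxy | rfl | hyx
  · have := hu.slope_le_of_hasDerivWithinAt hx hy hxy hu'
    rw [slope_def_field, div_le_iff₀ (sub_pos.mpr hxy)] at this
    linarith
  · simp
  · have := hu.le_slope_of_hasDerivWithinAt hy hx hyx hu'
    rw [slope_def_field, le_div_iff₀ (sub_pos.mpr hyx)] at this
    linarith

lemma mul_le_mul_of_concaveOn_Icc {u : ℝ → ℝ} {σ τ δ x y : ℝ} (hu : ConcaveOn ℝ (Icc σ τ) u)
    (hu₀ : ∀ z ∈ Icc σ τ, 0 ≤ u z) (hδ : 0 < δ) (hx : x ∈ Icc (σ + δ) (τ - δ))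
    (hy : y ∈ Icc σ τ) : δ * u y ≤ (τ - σ) * u x := by
  have hστ : σ ≤ τ := hy.1.trans hy.2
  have hσ : σ ∈ Icc σ τ := left_mem_Icc.mpr hστ
  have hτ : τ ∈ Icc σ τ := right_mem_Icc.mpr hστ
  have hxmem : x ∈ Icc σ τ := ⟨by linarith [hx.1], by linarith [hx.2]⟩
  have h₀σ := hu₀ σ hσ
  have h₀τ := hu₀ τ hτ
  have h₀x := hu₀ x hxmem
  have h₀y := hu₀ y hy
  rcases lt_trichotomy x y with hxy | rfl | hyx
  · have := (div_le_div_iff₀ (by linarith) (by linarith [hx.1])).mp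
      (hu.slope_anti_adjacent hσ hy (by linarith [hx.1]) hxy)
    nlinarith [hx.1, hy.2]
  · nlinarith [hx.1, hx.2]
  · have := (div_le_div_iff₀ (by linarith [hx.2]) (by linarith)).mp
      (hu.slope_anti_adjacent hy hτ hyx (by linarith [hx.2]))
    nlinarith [hx.2, hy.1]

lemma eq_of_isPreconnected_of_eventually_eq {X Y : Type*} [TopologicalSpace X]
    [TopologicalSpace Y] [T1Space Y] {s : Set X} (hs : IsPreconnected s) {u : X → Y}
    (hu : ContinuousOn u s) {c : Y}
    (hloc : ∀ x ∈ s, u x = c → ∀ᶠ y in nhdsWithin x s, u y = c) {x y : X} (hx : x ∈ s)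
    (hux : u x = c) (hy : y ∈ s) : u y = c := by
  have : PreconnectedSpace s := isPreconnected_iff_preconnectedSpace.mp hs
  have hclopen : IsClopen {z : s | u z = c} := by
    refine ⟨isClosed_singleton.preimage (continuousOn_iff_continuous_domRestrict.mp hu),
      isOpen_iff_mem_nhds.mpr fun z hz => ?_⟩
    rw [nhds_subtype_eq_comap_nhdsWithin]
    exact preimage_mem_comap (hloc z z.2 hz)
  exact (hclopen.eq_univ ⟨⟨x, hx⟩, hux⟩).ge (mem_univ ⟨y, hy⟩)

end Calculus

/-- The two boundary conditions on `[0, T]` under consideration, treated simultaneously. -/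
inductive BoundaryCondition
  | neumann
  | periodic

namespace BoundaryCondition

/-- The function `u` with derivative `u'` satisfies the boundary condition on `[0, T]`. -/
def Holds : BoundaryCondition → ℝ → (ℝ → ℝ) → (ℝ → ℝ) → Prop
  | neumann, T, _, u' => u' 0 = 0 ∧ u' T = 0
  | periodic, T, u, u' => u 0 = u T ∧ u' 0 = u' T

variable {B : BoundaryCondition} {T : ℝ} {u u' : ℝ → ℝ}

lemma Holds.deriv_eq (h : B.Holds T u u') : u' 0 = u' T := by
  cases B
  · exact h.1.trans h.2.symm
  · exact h.2

lemma Holds.neg (h : B.Holds T u u') : B.Holds T (-u) (-u') := by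
  cases B <;> simpa [Holds] using h

lemma Holds.deriv_eq_zero_of_isMaxOn (h : B.Holds T u u') (hT : 0 < T)
    (hu : ∀ x ∈ Icc 0 T, HasDerivWithinAt u (u' x) (Icc 0 T) x) {x : ℝ} (hx : x ∈ Icc 0 T)
    (hmax : IsMaxOn u (Icc 0 T) x) : u' x = 0 := by
  have h0 : (0 : ℝ) ∈ Icc 0 T := left_mem_Icc.mpr hT.le
  have hT' : T ∈ Icc 0 T := right_mem_Icc.mpr hT.le
  have hvar : ∀ {z y}, z ∈ Icc 0 T → u z = u x → y ∈ Icc 0 T → u' z * (y - z) ≤ 0 :=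
    fun {z _} hz hzx hy => mul_sub_nonpos_of_isMaxOn (convex_Icc 0 T) (hu z hz)
      (fun w hw => (hmax hw).trans hzx.ge) hz hy
  rcases B
  case neumann =>
    rcases hx.1.eq_or_lt with rfl | hx0
    · exact h.1
    rcases hx.2.eq_or_lt with rfl | hxT
    · exact h.2
    nlinarith [hvar hx rfl h0, hvar hx rfl hT']
  case periodic =>
    have hendpoint : u 0 = u x → u' 0 = 0 := by
      intro hux
      have hright := hvar hT' (h.1 ▸ hux) h0
      rw [← h.2] at hright
      nlinarith [hvar h0 hux hT']
    rcases hx.1.eq_or_lt with rfl | hx0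
    · exact hendpoint rfl
    rcases hx.2.eq_or_lt with rfl | hxT
    · exact h.2 ▸ hendpoint h.1
    nlinarith [hvar hx rfl h0, hvar hx rfl hT']

end BoundaryCondition

namespace IsSolOn

variable {T : ℝ} {f u u' : ℝ → ℝ}

lemma continuousOn (h : IsSolOn T f u u') : ContinuousOn u (Icc 0 T) :=
  fun x hx => (h.1 x hx).continuousWithinAt

lemma neg (h : IsSolOn T f u u') : IsSolOn T (-f) (-u) (-u') := by
  refine ⟨fun x hx => (h.1 x hx).neg, h.2.1.neg, fun x hx => ?_⟩
  simp only [Pi.neg_apply, intervalIntegral.integral_neg, h.2.2 x hx]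
  ring

lemma congr (h : IsSolOn T f u u') {k : ℝ → ℝ} (hk : EqOn f k (Icc 0 T)) : IsSolOn T k u u' := by
  refine ⟨h.1, h.2.1, fun x hx => ?_⟩
  rw [h.2.2 x hx, intervalIntegral.integral_congr fun t ht => hk ?_]
  rw [uIcc_of_le hx.1] at ht
  exact ⟨ht.1, ht.2.trans hx.2⟩

lemma integral_eq (h : IsSolOn T f u u') (hf : IntervalIntegrable f volume 0 T) {x y : ℝ}
    (hx : x ∈ Icc 0 T) (hy : y ∈ Icc 0 T) : ∫ t in x..y, f t = u' x - u' y := by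
  have h0 : (0 : ℝ) ∈ Icc 0 T := left_mem_Icc.mpr (hx.1.trans hx.2)
  rw [h.2.2 x hx, h.2.2 y hy, ← intervalIntegral.integral_interval_sub_left
    (intervalIntegrable_of_mem_Icc hf h0 hy) (intervalIntegrable_of_mem_Icc hf h0 hx)]
  ring

lemma integral_eq_zero (h : IsSolOn T f u u') {B : BoundaryCondition} (hB : B.Holds T u u')
    (hT : 0 < T) : ∫ t in (0 : ℝ)..T, f t = 0 := by
  linarith [h.2.2 T (right_mem_Icc.mpr hT.le), hB.deriv_eq]

lemma antitoneOn_deriv (h : IsSolOn T f u u') (hf : IntervalIntegrable f volume 0 T) {σ τ : ℝ}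
    (hsub : Icc σ τ ⊆ Icc 0 T) (hf₀ : ∀ᵐ t ∂volume.restrict (Icc σ τ), 0 ≤ f t) :
    AntitoneOn u' (Icc σ τ) := by
  intro x hx y hy hxy
  have hint : 0 ≤ ∫ t in x..y, f t := intervalIntegral.integral_nonneg_of_ae_restrict hxy
    (ae_restrict_of_ae_restrict_of_subset (Icc_subset_Icc hx.1 hy.2) hf₀)
  linarith [h.integral_eq hf (hsub hx) (hsub hy)]

lemma concaveOn (h : IsSolOn T f u u') (hf : IntervalIntegrable f volume 0 T) {σ τ : ℝ}
    (hsub : Icc σ τ ⊆ Icc 0 T) (hf₀ : ∀ᵐ t ∂volume.restrict (Icc σ τ), 0 ≤ f t) :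
    ConcaveOn ℝ (Icc σ τ) u := by
  have hderiv : ∀ x ∈ interior (Icc σ τ), HasDerivAt u (u' x) x := fun x hx =>
    (h.1 x (hsub (interior_subset hx))).hasDerivAt
      (mem_of_superset (mem_interior_iff_mem_nhds.mp hx) hsub)
  refine AntitoneOn.concaveOn_of_deriv (convex_Icc σ τ) (h.continuousOn.mono hsub)
    (fun x hx => (hderiv x hx).differentiableAt.differentiableWithinAt) fun x hx y hy hxy => ?_
  rw [(hderiv x hx).deriv, (hderiv y hy).deriv]
  exact h.antitoneOn_deriv hf hsub hf₀ (interior_subset hx) (interior_subset hy) hxy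

lemma le_tangent (h : IsSolOn T f u u') (hf : IntervalIntegrable f volume 0 T) {σ τ x y : ℝ}
    (hsub : Icc σ τ ⊆ Icc 0 T) (hf₀ : ∀ᵐ t ∂volume.restrict (Icc σ τ), 0 ≤ f t)
    (hx : x ∈ Icc σ τ) (hy : y ∈ Icc σ τ) : u y ≤ u x + u' x * (y - x) :=
  le_tangent_of_concaveOn (h.concaveOn hf hsub hf₀) ((h.1 x (hsub hx)).mono hsub) hx hy

lemma mul_integral_le (h : IsSolOn T f u u') (hf : IntervalIntegrable f volume 0 T)
    {σ τ δ M : ℝ} (hsub : Icc σ τ ⊆ Icc 0 T) (hδ : 0 < δ) (hδστ : σ + δ < τ - δ)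
    (hf₀ : ∀ᵐ t ∂volume.restrict (Icc σ τ), 0 ≤ f t) (hu : ∀ x ∈ Icc σ τ, 0 ≤ u x ∧ u x ≤ M) :
    δ * ∫ t in (σ + δ)..(τ - δ), f t ≤ 2 * M := by
  have hσ : σ ∈ Icc σ τ := ⟨le_rfl, by linarith⟩
  have hτ : τ ∈ Icc σ τ := ⟨by linarith, le_rfl⟩
  have hσδ : σ + δ ∈ Icc σ τ := ⟨by linarith, by linarith⟩
  have hτδ : τ - δ ∈ Icc σ τ := ⟨by linarith, by linarith⟩
  have hleft := h.le_tangent hf hsub hf₀ hσδ hσ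
  have hright := h.le_tangent hf hsub hf₀ hτδ hτ
  rw [h.integral_eq hf (hsub hσδ) (hsub hτδ)]
  nlinarith [hu σ hσ, hu τ hτ, hu _ hσδ, hu _ hτδ]

lemma deriv_eq_zero_of_isMaxOn (h : IsSolOn T f u u') {B : BoundaryCondition}
    (hB : B.Holds T u u') (hT : 0 < T) {x : ℝ} (hx : x ∈ Icc 0 T)
    (hmax : IsMaxOn u (Icc 0 T) x) : u' x = 0 :=
  hB.deriv_eq_zero_of_isMaxOn hT h.1 hx hmax

lemma deriv_eq_zero_of_isMinOn (h : IsSolOn T f u u') {B : BoundaryCondition}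
    (hB : B.Holds T u u') (hT : 0 < T) {x : ℝ} (hx : x ∈ Icc 0 T)
    (hmin : IsMinOn u (Icc 0 T) x) : u' x = 0 :=
  neg_eq_zero.mp (h.neg.deriv_eq_zero_of_isMaxOn hB.neg hT hx hmin.neg)

lemma abs_deriv_le (h : IsSolOn T f u u') (hf : IntervalIntegrable f volume 0 T)
    {B : BoundaryCondition} (hB : B.Holds T u u') (hT : 0 < T) {x : ℝ} (hx : x ∈ Icc 0 T) :
    |u' x| ≤ ∫ t in (0 : ℝ)..T, |f t| := by
  obtain ⟨z, hz, hmax⟩ :=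
    isCompact_Icc.exists_isMaxOn (nonempty_Icc.mpr hT.le) h.continuousOn
  calc |u' x| = |∫ t in x..z, f t| := by
        rw [h.integral_eq hf hx hz, h.deriv_eq_zero_of_isMaxOn hB hT hz hmax, sub_zero]
    _ ≤ ∫ t in (0 : ℝ)..T, |f t| := abs_intervalIntegral_le_of_mem_Icc hf hx hz

lemma abs_sub_le (h : IsSolOn T f u u') {s : Set ℝ} (hs : Convex ℝ s) (hsub : s ⊆ Icc 0 T)
    {C : ℝ} (hC : ∀ x ∈ s, |u' x| ≤ C) {x y : ℝ} (hx : x ∈ s) (hy : y ∈ s) :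
    |u y - u x| ≤ C * |y - x| :=
  hs.norm_image_sub_le_of_norm_hasDerivWithin_le (fun z hz => (h.1 z (hsub hz)).mono hsub) hC hx hy

/- A maximum point `x` with `M < u x` is critical, so the convexity of `u` near `x` makes `u`
constant there; hence the set where `u` attains its maximum is open as well as closed. -/
theorem le_of_exists_le (h : IsSolOn T f u u') (hf : IntervalIntegrable f volume 0 T)
    {B : BoundaryCondition} (hB : B.Holds T u u') {M : ℝ}
    (hM : ∀ᵐ t ∂volume.restrict (Icc 0 T), M < u t → f t ≤ 0) {y : ℝ} (hy : y ∈ Icc 0 T)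
    (huy : u y ≤ M) {x : ℝ} (hx : x ∈ Icc 0 T) : u x ≤ M := by
  rcases (hx.1.trans hx.2).eq_or_lt with rfl | hT
  · rwa [le_antisymm hx.2 hx.1, ← le_antisymm hy.2 hy.1]
  obtain ⟨z, hz, hmax⟩ := isCompact_Icc.exists_isMaxOn ⟨x, hx⟩ h.continuousOn
  by_contra! hux
  have hMz : M < u z := hux.trans_le (hmax hx)
  refine (huy.trans_lt hMz).ne (eq_of_isPreconnected_of_eventually_eq isPreconnected_Icc
    h.continuousOn (fun w hw huw => ?_) hz rfl hy)
  have hcrit : u' w = 0 :=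
    h.deriv_eq_zero_of_isMaxOn hB hT hw fun v hv => (hmax hv).trans huw.ge
  obtain ⟨ε, hε, hball⟩ := Metric.mem_nhdsWithin_iff.mp
    ((h.continuousOn w hw).eventually (lt_mem_nhds (huw ▸ hMz)))
  filter_upwards [self_mem_nhdsWithin, mem_nhdsWithin_of_mem_nhds (Metric.ball_mem_nhds w hε)]
    with v hv hvw
  have hsub : uIcc w v ⊆ Icc 0 T := uIcc_subset_Icc hw hv
  have hnonneg : ∀ᵐ t ∂volume.restrict (uIcc w v), 0 ≤ (-f) t := by
    filter_upwards [ae_restrict_of_ae_restrict_of_subset hsub hM,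
      ae_restrict_mem measurableSet_uIcc] with t ht htmem
    have htball : t ∈ Metric.ball w ε := by
      rw [Metric.mem_ball, Real.dist_eq] at hvw ⊢
      exact (abs_sub_left_of_mem_uIcc htmem).trans_lt hvw
    exact neg_nonneg.mpr (ht (hball ⟨htball, hsub htmem⟩))
  have htangent := h.neg.le_tangent hf.neg hsub hnonneg left_mem_uIcc right_mem_uIcc
  simp only [Pi.neg_apply, hcrit, neg_zero, zero_mul, add_zero, neg_le_neg_iff, huw] at htangent
  exact le_antisymm (hmax hv) htangent

theorem nonneg (h : IsSolOn T f u u') (hf : IntervalIntegrable f volume 0 T)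
    {B : BoundaryCondition} (hB : B.Holds T u u') (hT : 0 < T)
    (hneg : ∀ x ∈ Icc 0 T, u x < 0 → 0 < f x) {x : ℝ} (hx : x ∈ Icc 0 T) : 0 ≤ u x := by
  by_cases hex : ∃ y ∈ Icc 0 T, 0 ≤ u y
  · obtain ⟨y, hy, huy⟩ := hex
    refine neg_nonpos.mp (h.neg.le_of_exists_le hf.neg hB.neg ?_ hy (neg_nonpos.mpr huy) hx)
    filter_upwards [ae_restrict_mem measurableSet_Icc] with t ht hut
    exact neg_nonpos.mpr (hneg t ht (neg_pos.mp hut)).le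
  · push Not at hex
    refine absurd (h.integral_eq_zero hB hT) (ne_of_gt ?_)
    exact intervalIntegral.intervalIntegral_pos_of_pos_on hf
      (fun t ht => hneg t (Ioo_subset_Icc_self ht) (hex t (Ioo_subset_Icc_self ht))) hT

/- On `s = [0, T] ∩ [x - d, x + d]` one has `|u'| ≤ (max u) * ∫ |b|`, so that
`max u ≤ d * (∫ |b|) * max u`. -/
lemma eventually_eq_zero (h : IsSolOn T f u u') (hf : IntervalIntegrable f volume 0 T)
    (hu : ∀ x ∈ Icc 0 T, 0 ≤ u x) {b : ℝ → ℝ} (hb : IntervalIntegrable b volume 0 T)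
    (hfb : ∀ t ∈ Icc 0 T, |f t| ≤ |b t| * u t) {x : ℝ} (hx : x ∈ Icc 0 T) (hux : u x = 0)
    (hu'x : u' x = 0) : ∀ᶠ y in nhdsWithin x (Icc 0 T), u y = 0 := by
  set I := ∫ t in (0 : ℝ)..T, |b t|
  have hI : 0 ≤ I := intervalIntegral.integral_nonneg (hx.1.trans hx.2) fun _ _ => abs_nonneg _
  obtain ⟨d, hd, hdI⟩ := exists_pos_mul_lt one_pos I
  set s := Icc 0 T ∩ Metric.closedBall x d
  have hsub : s ⊆ Icc 0 T := inter_subset_left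
  have hsconv : Convex ℝ s := (convex_Icc 0 T).inter (convex_closedBall x d)
  have hxs : x ∈ s := ⟨hx, Metric.mem_closedBall_self hd.le⟩
  obtain ⟨z, hz, hmax⟩ := (isCompact_Icc.inter_right Metric.isClosed_closedBall).exists_isMaxOn
    ⟨x, hxs⟩ (h.continuousOn.mono hsub)
  have hz₀ : 0 ≤ u z := hu z hz.1
  have hderiv : ∀ y ∈ s, |u' y| ≤ I * u z := by
    intro y hy
    have hbz : IntervalIntegrable (fun t => |b t| * u z) volume 0 T := hb.abs.mul_const _
    have hfz : ∀ᵐ t ∂volume.restrict (Set.uIoc x y), ‖f t‖ ≤ |b t| * u z := by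
      filter_upwards [ae_restrict_mem measurableSet_uIoc] with t ht
      have hts : t ∈ s := hsconv.ordConnected.uIcc_subset hxs hy (uIoc_subset_uIcc ht)
      exact (hfb t hts.1).trans (mul_le_mul_of_nonneg_left (hmax hts) (abs_nonneg _))
    calc |u' y| = |∫ t in x..y, f t| := by
          rw [h.integral_eq hf hx hy.1, hu'x, zero_sub, abs_neg]
      _ ≤ |∫ t in x..y, |b t| * u z| := intervalIntegral.norm_integral_le_abs_of_norm_le hfz
          (intervalIntegrable_of_mem_Icc hbz hx hy.1)
      _ ≤ ∫ t in (0 : ℝ)..T, |(|b t| * u z)| := abs_intervalIntegral_le_of_mem_Icc hbz hx hy.1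
      _ = I * u z := by
          simp only [abs_mul, abs_abs, abs_of_nonneg hz₀, intervalIntegral.integral_mul_const, I]
  have hz_eq : u z = 0 := by
    have hle := (le_abs_self _).trans (h.abs_sub_le hsconv hsub hderiv hxs hz)
    have hdist : |z - x| ≤ d := hz.2
    rw [hux, sub_zero] at hle
    nlinarith [mul_le_mul_of_nonneg_left hdist (mul_nonneg hI hz₀)]
  filter_upwards [self_mem_nhdsWithin,
    mem_nhdsWithin_of_mem_nhds (Metric.closedBall_mem_nhds x hd)] with y hy hyx
  exact le_antisymm ((hmax ⟨hy, hyx⟩).trans hz_eq.le) (hu y hy)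

theorem pos_of_exists_pos (h : IsSolOn T f u u') (hf : IntervalIntegrable f volume 0 T)
    {B : BoundaryCondition} (hB : B.Holds T u u') (hT : 0 < T) (hu : ∀ x ∈ Icc 0 T, 0 ≤ u x)
    {b : ℝ → ℝ} (hb : IntervalIntegrable b volume 0 T)
    (hfb : ∀ t ∈ Icc 0 T, |f t| ≤ |b t| * u t) {y : ℝ} (hy : y ∈ Icc 0 T) (huy : 0 < u y)
    {x : ℝ} (hx : x ∈ Icc 0 T) : 0 < u x := by
  refine (hu x hx).lt_of_ne' fun hux => huy.ne' ?_
  refine eq_of_isPreconnected_of_eventually_eq isPreconnected_Icc h.continuousOn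
    (fun z hz huz => h.eventually_eq_zero hf hu hb hfb hz huz ?_) hx hux hy
  exact h.deriv_eq_zero_of_isMinOn hB hT hz fun w hw => huz.trans_le (hu w hw)

end IsSolOn

namespace BoundaryCondition

/-- The initial slope for which the solution of `u'' + f = 0` satisfies the boundary condition,
provided that `f` has mean zero. -/
noncomputable def initialSlope : BoundaryCondition → ℝ → (ℝ → ℝ) → ℝ
  | neumann, _, _ => 0
  | periodic, T, f => T⁻¹ * ∫ x in (0 : ℝ)..T, ∫ t in (0 : ℝ)..x, f t

/-- The derivative of `BoundaryCondition.green`. -/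
noncomputable def greenDeriv (B : BoundaryCondition) (T : ℝ) (f : ℝ → ℝ) (x : ℝ) : ℝ :=
  B.initialSlope T f - ∫ t in (0 : ℝ)..x, f t

/-- The solution of `u'' + f = 0`, `u 0 = 0` that satisfies the boundary condition when `f` has mean
zero. As an operator in `f` it extends the inverse of `u ↦ -u''` from the functions of mean
zero to all integrable functions. -/
noncomputable def green (B : BoundaryCondition) (T : ℝ) (f : ℝ → ℝ) (x : ℝ) : ℝ :=
  ∫ y in (0 : ℝ)..x, B.greenDeriv T f y

variable {T : ℝ} {f k : ℝ → ℝ}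

lemma initialSlope_add (B : BoundaryCondition) (hT : 0 ≤ T)
    (hf : IntervalIntegrable f volume 0 T) (hk : IntervalIntegrable k volume 0 T) :
    B.initialSlope T (fun t => f t + k t) = B.initialSlope T f + B.initialSlope T k := by
  cases B
  · simp [initialSlope]
  · rw [initialSlope, initialSlope, initialSlope, ← mul_add, ← intervalIntegral.integral_add
      (intervalIntegrable_intervalIntegral hT hf) (intervalIntegrable_intervalIntegral hT hk)]
    congr 1
    refine intervalIntegral.integral_congr fun x hx => ?_
    exact intervalIntegral.integral_add (hf.mono_set (uIcc_subset_uIcc_left hx))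
      (hk.mono_set (uIcc_subset_uIcc_left hx))

lemma greenDeriv_const_mul (B : BoundaryCondition) (T c : ℝ) (f : ℝ → ℝ) (x : ℝ) :
    B.greenDeriv T (fun t => c * f t) x = c * B.greenDeriv T f x := by
  cases B <;> simp only [greenDeriv, initialSlope, intervalIntegral.integral_const_mul] <;> ring

lemma greenDeriv_add (B : BoundaryCondition) (hf : IntervalIntegrable f volume 0 T)
    (hk : IntervalIntegrable k volume 0 T) {x : ℝ} (hx : x ∈ Icc 0 T) :
    B.greenDeriv T (fun t => f t + k t) x = B.greenDeriv T f x + B.greenDeriv T k x := by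
  have h0 : (0 : ℝ) ∈ Icc 0 T := left_mem_Icc.mpr (hx.1.trans hx.2)
  rw [greenDeriv, greenDeriv, greenDeriv, B.initialSlope_add (hx.1.trans hx.2) hf hk,
    intervalIntegral.integral_add (intervalIntegrable_of_mem_Icc hf h0 hx)
      (intervalIntegrable_of_mem_Icc hk h0 hx)]
  ring

lemma abs_initialSlope_le (B : BoundaryCondition) (hT : 0 ≤ T)
    (hf : IntervalIntegrable f volume 0 T) :
    |B.initialSlope T f| ≤ ∫ t in (0 : ℝ)..T, |f t| := by
  have hI : 0 ≤ ∫ t in (0 : ℝ)..T, |f t| :=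
    intervalIntegral.integral_nonneg hT fun _ _ => abs_nonneg _
  cases B
  case neumann => simpa only [initialSlope, abs_zero] using hI
  case periodic =>
    have hbound : ‖∫ x in (0 : ℝ)..T, ∫ t in (0 : ℝ)..x, f t‖
        ≤ (∫ t in (0 : ℝ)..T, |f t|) * |T - 0| :=
      intervalIntegral.norm_integral_le_of_norm_le_const fun x hx =>
        abs_intervalIntegral_le_of_mem_Icc hf (left_mem_Icc.mpr hT)
          (Ioc_subset_Icc_self (uIoc_of_le hT ▸ hx))
    rw [Real.norm_eq_abs, sub_zero, abs_of_nonneg hT] at hbound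
    rw [initialSlope, abs_mul, abs_inv, abs_of_nonneg hT]
    exact inv_mul_le_of_le_mul₀ hT hI (mul_comm T _ ▸ hbound)

lemma abs_greenDeriv_le (B : BoundaryCondition) (hf : IntervalIntegrable f volume 0 T) {x : ℝ}
    (hx : x ∈ Icc 0 T) : |B.greenDeriv T f x| ≤ 2 * ∫ t in (0 : ℝ)..T, |f t| := by
  have hT : 0 ≤ T := hx.1.trans hx.2
  calc |B.greenDeriv T f x| ≤ |B.initialSlope T f| + |∫ t in (0 : ℝ)..x, f t| := abs_sub _ _
    _ ≤ (∫ t in (0 : ℝ)..T, |f t|) + ∫ t in (0 : ℝ)..T, |f t| :=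
        add_le_add (B.abs_initialSlope_le hT hf)
          (abs_intervalIntegral_le_of_mem_Icc hf (left_mem_Icc.mpr hT) hx)
    _ = 2 * ∫ t in (0 : ℝ)..T, |f t| := (two_mul _).symm

lemma continuousOn_greenDeriv (B : BoundaryCondition) (hT : 0 ≤ T)
    (hf : IntervalIntegrable f volume 0 T) : ContinuousOn (B.greenDeriv T f) (Icc 0 T) :=
  continuousOn_const.sub (continuousOn_intervalIntegral hT hf)

lemma intervalIntegrable_greenDeriv (B : BoundaryCondition)
    (hf : IntervalIntegrable f volume 0 T) {x : ℝ} (hx : x ∈ Icc 0 T) :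
    IntervalIntegrable (B.greenDeriv T f) volume 0 x :=
  ((B.continuousOn_greenDeriv (hx.1.trans hx.2) hf).mono
    (uIcc_subset_Icc (left_mem_Icc.mpr (hx.1.trans hx.2)) hx)).intervalIntegrable

@[simp]
lemma green_zero (B : BoundaryCondition) (T : ℝ) (f : ℝ → ℝ) : B.green T f 0 = 0 :=
  intervalIntegral.integral_same

lemma green_const_mul (B : BoundaryCondition) (T c : ℝ) (f : ℝ → ℝ) (x : ℝ) :
    B.green T (fun t => c * f t) x = c * B.green T f x := by
  simp only [green, greenDeriv_const_mul, intervalIntegral.integral_const_mul]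

lemma green_add (B : BoundaryCondition) (hf : IntervalIntegrable f volume 0 T)
    (hk : IntervalIntegrable k volume 0 T) {x : ℝ} (hx : x ∈ Icc 0 T) :
    B.green T (fun t => f t + k t) x = B.green T f x + B.green T k x := by
  rw [green, green, green, ← intervalIntegral.integral_add (B.intervalIntegrable_greenDeriv hf hx)
    (B.intervalIntegrable_greenDeriv hk hx)]
  exact intervalIntegral.integral_congr fun y hy => B.greenDeriv_add hf hk
    (uIcc_subset_Icc (left_mem_Icc.mpr (hx.1.trans hx.2)) hx hy)

lemma isSolOn_const_add_green (B : BoundaryCondition) (hT : 0 ≤ T)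
    (hf : IntervalIntegrable f volume 0 T) (c : ℝ) :
    IsSolOn T f (fun x => c + B.green T f x) (B.greenDeriv T f) := by
  have hcont := B.continuousOn_greenDeriv hT hf
  refine ⟨fun x hx => ?_, hcont, fun x _ => by simp [greenDeriv]⟩
  have : Fact (x ∈ Icc 0 T) := ⟨hx⟩
  exact (intervalIntegral.integral_hasDerivWithinAt_right (B.intervalIntegrable_greenDeriv hf hx)
    (hcont.stronglyMeasurableAtFilter_nhdsWithin measurableSet_Icc x) (hcont x hx)).const_add c

lemma continuousOn_green (B : BoundaryCondition) (hT : 0 ≤ T)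
    (hf : IntervalIntegrable f volume 0 T) : ContinuousOn (B.green T f) (Icc 0 T) := by
  simpa only [zero_add] using (B.isSolOn_const_add_green hT hf 0).continuousOn

lemma holds_const_add_green (B : BoundaryCondition) (hT : 0 < T)
    (hf : IntervalIntegrable f volume 0 T) (hf₀ : ∫ t in (0 : ℝ)..T, f t = 0) (c : ℝ) :
    B.Holds T (fun x => c + B.green T f x) (B.greenDeriv T f) := by
  have hslope : B.greenDeriv T f 0 = B.initialSlope T f ∧
      B.greenDeriv T f T = B.initialSlope T f := by simp [greenDeriv, hf₀]
  cases B
  case neumann => exact hslope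
  case periodic =>
    refine ⟨?_, hslope.1.trans hslope.2.symm⟩
    have hmean : periodic.green T f T = 0 := by
      simp only [green, greenDeriv]
      rw [intervalIntegral.integral_sub intervalIntegrable_const
        (intervalIntegrable_intervalIntegral hT.le hf), intervalIntegral.integral_const,
        initialSlope, sub_zero, smul_eq_mul, mul_inv_cancel_left₀ hT.ne', sub_self]
    simp [hmean]

lemma abs_green_sub_le (B : BoundaryCondition) (hT : 0 ≤ T)
    (hf : IntervalIntegrable f volume 0 T) {x y : ℝ} (hx : x ∈ Icc 0 T) (hy : y ∈ Icc 0 T) :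
    |B.green T f y - B.green T f x| ≤ 2 * (∫ t in (0 : ℝ)..T, |f t|) * |y - x| := by
  simpa using (B.isSolOn_const_add_green hT hf 0).abs_sub_le (convex_Icc 0 T) Subset.rfl
    (fun z hz => B.abs_greenDeriv_le hf hz) hx hy

end BoundaryCondition

section CompactOperators

variable {α F : Type*} [PseudoMetricSpace α] [CompactSpace α] [NormedAddCommGroup F]
  [ProperSpace F]

lemma isCompact_setOf_norm_le_and_lipschitzWith (C : ℝ) (L : NNReal) :
    IsCompact {φ : C(α, F) | ‖φ‖ ≤ C ∧ LipschitzWith L φ} := by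
  rcases lt_or_ge C 0 with hC | hC
  · convert isCompact_empty
    exact eq_empty_of_forall_notMem fun φ hφ => (hφ.1.trans_lt hC).not_ge (norm_nonneg φ)
  refine ArzelaAscoli.isCompact_of_equicontinuous _ ?_
    (LipschitzWith.uniformEquicontinuous _ L fun φ => φ.2.2).equicontinuous
  convert (isCompact_univ_pi fun _ : α => isCompact_closedBall (0 : F) C).inter_right
    (isClosed_setOfPred_lipschitzWith L) using 1
  ext h
  constructor
  · rintro ⟨φ, hφ, rfl⟩
    exact ⟨fun x _ => mem_closedBall_zero_iff.mpr (φ.norm_coe_le_norm x |>.trans hφ.1), hφ.2⟩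
  · rintro ⟨hC', hL⟩
    exact ⟨⟨h, hL.continuous⟩, ⟨(ContinuousMap.norm_le _ hC).mpr fun x =>
      mem_closedBall_zero_iff.mp (hC' x (mem_univ x)), hL⟩, rfl⟩

lemma isCompactOperator_of_dist_le {E : Type*} [SeminormedAddCommGroup E] [NormedSpace ℝ E]
    [NormedSpace ℝ F] (A : E →L[ℝ] C(α, F)) (L : NNReal)
    (hL : ∀ v x y, dist (A v x) (A v y) ≤ L * ‖v‖ * dist x y) : IsCompactOperator A := by
  refine (isCompactOperator_iff_exists_mem_nhds_image_subset_compact A).mpr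
    ⟨Metric.closedBall 0 1, Metric.closedBall_mem_nhds 0 one_pos, _,
      isCompact_setOf_norm_le_and_lipschitzWith ‖A‖ L, ?_⟩
  rintro _ ⟨v, hv, rfl⟩
  rw [mem_closedBall_zero_iff] at hv
  refine ⟨A.unit_le_opNorm v hv, LipschitzWith.of_dist_le_mul fun x y => (hL v x y).trans ?_⟩
  gcongr
  exact mul_le_of_le_one_right L.2 hv

end CompactOperators

section WeightedOperators

variable {T : ℝ} (hT : 0 ≤ T) {p : ℝ → ℝ} (hp : IntervalIntegrable p volume 0 T)

include hp

lemma intervalIntegrable_mul_IccExtend (φ : C(Icc 0 T, ℝ)) :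
    IntervalIntegrable (fun t => p t * IccExtend hT φ t) volume 0 T :=
  hp.mul_continuousOn (φ.continuous.Icc_extend').continuousOn

lemma integral_abs_mul_IccExtend_le (φ : C(Icc 0 T, ℝ)) :
    ∫ t in (0 : ℝ)..T, |p t * IccExtend hT φ t| ≤ (∫ t in (0 : ℝ)..T, |p t|) * ‖φ‖ := by
  rw [← intervalIntegral.integral_mul_const]
  refine intervalIntegral.integral_mono_on hT (intervalIntegrable_mul_IccExtend hT hp φ).abs
    (hp.abs.mul_const _) fun t _ => ?_
  rw [abs_mul]
  exact mul_le_mul_of_nonneg_left (φ.norm_coe_le_norm _) (abs_nonneg _)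

/-- The functional `φ ↦ ∫ p φ` on `C([0, T])` for an integrable weight `p`. -/
noncomputable def weightedIntegral : C(Icc 0 T, ℝ) →L[ℝ] ℝ :=
  LinearMap.mkContinuous
    { toFun := fun φ => ∫ t in (0 : ℝ)..T, p t * IccExtend hT φ t
      map_add' := fun φ ψ => by
        rw [← intervalIntegral.integral_add (intervalIntegrable_mul_IccExtend hT hp φ)
          (intervalIntegrable_mul_IccExtend hT hp ψ)]
        simp only [IccExtend, Function.comp_apply, ContinuousMap.add_apply, mul_add]
      map_smul' := fun c φ => by
        simp only [IccExtend, Function.comp_apply, ContinuousMap.smul_apply, smul_eq_mul,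
          RingHom.id_apply, ← intervalIntegral.integral_const_mul, mul_left_comm] }
    (∫ t in (0 : ℝ)..T, |p t|) fun φ =>
      (intervalIntegral.abs_integral_le_integral_abs hT).trans
        (integral_abs_mul_IccExtend_le hT hp φ)

namespace BoundaryCondition

variable (B : BoundaryCondition)

lemma abs_green_mul_IccExtend_sub_le (φ : C(Icc 0 T, ℝ)) {x y : ℝ} (hx : x ∈ Icc 0 T)
    (hy : y ∈ Icc 0 T) :
    |B.green T (fun t => p t * IccExtend hT φ t) y - B.green T (fun t => p t * IccExtend hT φ t) x|
      ≤ 2 * (∫ t in (0 : ℝ)..T, |p t|) * ‖φ‖ * |y - x| := by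
  refine (B.abs_green_sub_le hT (intervalIntegrable_mul_IccExtend hT hp φ) hx hy).trans ?_
  rw [mul_assoc 2 _ ‖φ‖]
  gcongr
  exact integral_abs_mul_IccExtend_le hT hp φ

/-- The operator `φ ↦ B.green T (p φ)` on `C([0, T])` for an integrable weight `p`. -/
noncomputable def weightedGreen : C(Icc 0 T, ℝ) →L[ℝ] C(Icc 0 T, ℝ) :=
  LinearMap.mkContinuous
    { toFun := fun φ => ⟨fun x => B.green T (fun t => p t * IccExtend hT φ t) x,
        continuousOn_iff_continuous_domRestrict.mp
          (B.continuousOn_green hT (intervalIntegrable_mul_IccExtend hT hp φ))⟩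
      map_add' := fun φ ψ => by
        ext x
        refine Eq.trans ?_ (B.green_add (intervalIntegrable_mul_IccExtend hT hp φ)
          (intervalIntegrable_mul_IccExtend hT hp ψ) x.2)
        simp only [IccExtend, Function.comp_apply, ContinuousMap.add_apply, mul_add,
          ContinuousMap.coe_mk]
      map_smul' := fun c φ => by
        ext x
        simp only [IccExtend, Function.comp_apply, ContinuousMap.smul_apply, smul_eq_mul,
          RingHom.id_apply, ← green_const_mul, mul_left_comm, ContinuousMap.coe_mk] }
    (2 * (∫ t in (0 : ℝ)..T, |p t|) * T) fun φ => by
      have hI : 0 ≤ ∫ t in (0 : ℝ)..T, |p t| :=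
        intervalIntegral.integral_nonneg hT fun _ _ => abs_nonneg _
      refine (ContinuousMap.norm_le _ (by positivity)).mpr fun x => ?_
      calc |B.green T (fun t => p t * IccExtend hT φ t) x|
          ≤ 2 * (∫ t in (0 : ℝ)..T, |p t|) * ‖φ‖ * |(x : ℝ)| := by
            simpa only [green_zero, sub_zero] using
              B.abs_green_mul_IccExtend_sub_le hT hp φ (left_mem_Icc.mpr hT) x.2
        _ ≤ 2 * (∫ t in (0 : ℝ)..T, |p t|) * ‖φ‖ * T := by
            rw [abs_of_nonneg x.2.1]
            gcongr
            exact x.2.2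
        _ = 2 * (∫ t in (0 : ℝ)..T, |p t|) * T * ‖φ‖ := by ring

lemma isCompactOperator_weightedGreen : IsCompactOperator (B.weightedGreen hT hp) := by
  have hI : 0 ≤ 2 * ∫ t in (0 : ℝ)..T, |p t| := by
    have := intervalIntegral.integral_nonneg (μ := volume) hT fun t _ => abs_nonneg (p t)
    positivity
  exact isCompactOperator_of_dist_le _ ⟨_, hI⟩ fun φ x y =>
    B.abs_green_mul_IccExtend_sub_le hT hp φ y.2 x.2

end BoundaryCondition

end WeightedOperators

section Nonlinearity

variable {g : ℝ → ℝ}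

lemma exists_forall_mul_le_of_growthLiminf_pos (hg : 0 < GrowthLiminf g) :
    ∃ κ > 0, ∃ s₀ > 0, ∀ s, s₀ ≤ s → κ * s ≤ g s := by
  obtain ⟨κ, hκ, hκg⟩ := EReal.lt_iff_exists_real_btwn.mp hg
  obtain ⟨S, hS⟩ := eventually_atTop.mp (eventually_lt_of_lt_liminf hκg)
  refine ⟨κ, EReal.coe_pos.mp hκ, max S 1, by positivity, fun s hs => ?_⟩
  have hs₀ : 0 < s := one_pos.trans_le ((le_max_right S 1).trans hs)
  exact ((lt_div_iff₀ hs₀).mp (EReal.coe_lt_coe_iff.mp (hS s ((le_max_left S 1).trans hs)))).le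

lemma exists_forall_le_mul_of_tendsto_div (hg₀ : g 0 = 0)
    (hg : Tendsto (fun s => g s / s) (nhdsWithin 0 (Ioi 0)) (nhds 0)) {ε : ℝ} (hε : 0 < ε) :
    ∃ d > 0, ∀ s, 0 ≤ s → s < d → g s ≤ ε * s := by
  obtain ⟨d, hd, hlt⟩ := mem_nhdsGT_iff_exists_Ioo_subset.mp (hg.eventually (gt_mem_nhds hε))
  refine ⟨d, hd, fun s hs hsd => ?_⟩
  rcases hs.eq_or_lt with rfl | hs₀
  · rw [hg₀, mul_zero]
  · exact ((div_lt_iff₀ hs₀).mp (hlt ⟨hs₀, hsd⟩)).le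

lemma exists_forall_le_mul_of_mem_Icc (hgc : ContinuousOn g (Ici 0)) (hg₀ : g 0 = 0)
    (hg : Tendsto (fun s => g s / s) (nhdsWithin 0 (Ioi 0)) (nhds 0)) (R : ℝ) :
    ∃ C, ∀ s ∈ Icc 0 R, g s ≤ C * s := by
  obtain ⟨d, hd, hlt⟩ := exists_forall_le_mul_of_tendsto_div hg₀ hg one_pos
  obtain ⟨C, hC⟩ := (isCompact_Icc (a := (0 : ℝ)) (b := R)).bddAbove_image
    (hgc.mono Icc_subset_Ici_self)
  refine ⟨max 1 (C / d), fun s hs => ?_⟩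
  rcases lt_or_ge s d with hsd | hds
  · exact (hlt s hs.1 hsd).trans (mul_le_mul_of_nonneg_right (le_max_left _ _) hs.1)
  · have hgC : g s ≤ C := hC (mem_image_of_mem g hs)
    calc g s ≤ C / d * d := by rwa [div_mul_cancel₀ C hd.ne']
      _ ≤ max 1 (C / d) * s := mul_le_mul (le_max_right _ _) hds hd.le (by positivity)

end Nonlinearity

section Weight

lemma exists_integral_pos_of_not_ae_eq_zero {a : ℝ → ℝ} {σ τ : ℝ} (hστ : σ ≤ τ)
    (ha : IntervalIntegrable a volume σ τ) (ha₀ : ∀ᵐ t ∂volume.restrict (Icc σ τ), 0 ≤ a t)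
    (hne : ¬∀ᵐ t ∂volume.restrict (Icc σ τ), a t = 0) :
    ∃ δ > 0, σ + δ < τ - δ ∧ 0 < ∫ t in (σ + δ)..(τ - δ), a t := by
  have hlt : σ < τ := hστ.lt_of_ne fun h => hne (by simp [h])
  have hpos : 0 < ∫ t in σ..τ, a t := by
    rw [intervalIntegral.integral_of_le hστ, ← integral_Icc_eq_integral_Ioc]
    refine (setIntegral_nonneg_of_ae_restrict ha₀).lt_of_ne' fun h => hne ?_
    exact (integral_eq_zero_iff_of_nonneg_ae ha₀
      ((intervalIntegrable_iff_integrableOn_Icc_of_le hστ).mp ha)).mp h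
  set F : ℝ → ℝ := fun x => ∫ t in σ..x, a t
  have hF : ContinuousOn F (Icc σ τ) := by
    simpa only [uIcc_of_le hστ] using
      intervalIntegral.continuousOn_primitive_interval' ha left_mem_uIcc
  have hcont : ContinuousOn (fun δ => F (τ - δ) - F (σ + δ)) (Icc 0 (τ - σ)) :=
    (hF.comp (by fun_prop) fun δ hδ => ⟨by linarith [hδ.2], by linarith [hδ.1]⟩).sub
      (hF.comp (by fun_prop) fun δ hδ => ⟨by linarith [hδ.1], by linarith [hδ.2]⟩)
  have hev : ∀ᶠ δ in nhdsWithin 0 (Icc 0 (τ - σ)), 0 < F (τ - δ) - F (σ + δ) :=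
    (hcont 0 (left_mem_Icc.mpr (by linarith))).eventually (lt_mem_nhds (by simpa [F] using hpos))
  rw [nhdsWithin_Icc_eq_nhdsGE (sub_pos.mpr hlt)] at hev
  obtain ⟨δ, hFδ, hδ⟩ := ((hev.filter_mono (nhdsWithin_mono 0 Ioi_subset_Ici_self)).and
    (Ioo_mem_nhdsGT (half_pos (sub_pos.mpr hlt)))).exists
  have hmem : ∀ {x}, σ ≤ x → x ≤ τ → IntervalIntegrable a volume σ x := fun hσx hxτ =>
    intervalIntegrable_of_mem_Icc ha (left_mem_Icc.mpr hστ) ⟨hσx, hxτ⟩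
  refine ⟨δ, hδ.1, by linarith [hδ.2], ?_⟩
  rwa [← intervalIntegral.integral_interval_sub_left
    (hmem (by linarith [hδ.2]) (by linarith [hδ.1]))
    (hmem (by linarith [hδ.1]) (by linarith [hδ.2]))]

lemma integral_mul_neg_of_abs_sub_le {b k : ℝ → ℝ} {x y ε C : ℝ} (hxy : x ≤ y)
    (hb : IntervalIntegrable b volume x y)
    (hε : ε * ∫ t in x..y, |b t| < -∫ t in x..y, b t) (hk : ContinuousOn k (Icc x y))
    (hC : 0 < C) (hkC : ∀ t ∈ Icc x y, |k t - C| ≤ ε * C) : ∫ t in x..y, b t * k t < 0 := by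
  have hint : IntervalIntegrable (fun t => b t * (k t - C)) volume x y :=
    hb.mul_continuousOn ((hk.sub continuousOn_const).mono (uIcc_of_le hxy).subset)
  calc ∫ t in x..y, b t * k t = (∫ t in x..y, b t * C) + ∫ t in x..y, b t * (k t - C) := by
        rw [← intervalIntegral.integral_add (hb.mul_const C) hint]
        exact intervalIntegral.integral_congr fun t _ => by ring
    _ ≤ (∫ t in x..y, b t * C) + ∫ t in x..y, |b t| * (ε * C) := by
        gcongr
        refine intervalIntegral.integral_mono_on hxy hint (hb.abs.mul_const _) fun t ht => ?_
        calc b t * (k t - C) ≤ |b t| * |k t - C| := (le_abs_self _).trans_eq (abs_mul _ _)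
          _ ≤ |b t| * (ε * C) := mul_le_mul_of_nonneg_left (hkC t ht) (abs_nonneg _)
    _ = ((∫ t in x..y, b t) + ε * ∫ t in x..y, |b t|) * C := by
        rw [intervalIntegral.integral_mul_const, intervalIntegral.integral_mul_const]
        ring
    _ < 0 := mul_neg_of_neg_of_pos (by linarith) hC

lemma mul_integral_le_integral_of_mul_comp_le {b f g v : ℝ → ℝ} {κ s₀ m x y : ℝ} (hxy : x ≤ y)
    (hb : IntervalIntegrable b volume x y) (hf : IntervalIntegrable f volume x y)
    (hb₀ : ∀ᵐ t ∂volume.restrict (Icc x y), 0 ≤ b t) (hκ : 0 ≤ κ)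
    (hg : ∀ s, s₀ ≤ s → κ * s ≤ g s) (hm : s₀ ≤ m) (hmv : ∀ t ∈ Icc x y, m ≤ v t)
    (hfb : ∀ᵐ t ∂volume.restrict (Icc x y), b t * g (v t) ≤ f t) :
    κ * m * ∫ t in x..y, b t ≤ ∫ t in x..y, f t := by
  rw [← intervalIntegral.integral_const_mul]
  refine intervalIntegral.integral_mono_ae_restrict hxy (hb.const_mul _) hf ?_
  filter_upwards [hb₀, hfb, ae_restrict_mem measurableSet_Icc] with t hbt hft ht
  have hgm : κ * m ≤ g (v t) :=
    (mul_le_mul_of_nonneg_left (hmv t ht) hκ).trans (hg _ (hm.trans (hmv t ht)))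
  calc κ * m * b t ≤ g (v t) * b t := mul_le_mul_of_nonneg_right hgm hbt
    _ ≤ f t := (mul_comm _ _).trans_le hft

end Weight

namespace IsSolOn

variable {T : ℝ} {f u u' : ℝ → ℝ}

lemma abs_sub_le_of_abs_le_mul (h : IsSolOn T f u u') (hf : IntervalIntegrable f volume 0 T)
    {B : BoundaryCondition} (hB : B.Holds T u u') (hT : 0 < T) {b : ℝ → ℝ}
    (hb : IntervalIntegrable b volume 0 T) {K : ℝ} (hfb : ∀ t ∈ Icc 0 T, |f t| ≤ |b t| * K)
    {x y : ℝ} (hx : x ∈ Icc 0 T) (hy : y ∈ Icc 0 T) :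
    |u y - u x| ≤ (∫ t in (0 : ℝ)..T, |b t|) * K * T := by
  have hfK : ∫ t in (0 : ℝ)..T, |f t| ≤ (∫ t in (0 : ℝ)..T, |b t|) * K := by
    rw [← intervalIntegral.integral_mul_const]
    exact intervalIntegral.integral_mono_on hT.le hf.abs (hb.abs.mul_const K) hfb
  have hf₀ : 0 ≤ ∫ t in (0 : ℝ)..T, |f t| :=
    intervalIntegral.integral_nonneg hT.le fun _ _ => abs_nonneg _
  calc |u y - u x| ≤ (∫ t in (0 : ℝ)..T, |f t|) * |y - x| :=
        h.abs_sub_le (convex_Icc 0 T) Subset.rfl (fun z hz => h.abs_deriv_le hf hB hT hz) hx hy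
    _ ≤ (∫ t in (0 : ℝ)..T, |b t|) * K * T :=
        mul_le_mul hfK (by rw [abs_le]; constructor <;> linarith [hx.1, hx.2, hy.1, hy.2])
          (abs_nonneg _) (hf₀.trans hfK)

lemma abs_div_sub_one_lt (h : IsSolOn T f u u') (hf : IntervalIntegrable f volume 0 T)
    {B : BoundaryCondition} (hB : B.Holds T u u') (hT : 0 < T) {b : ℝ → ℝ}
    (hb : IntervalIntegrable b volume 0 T) {ε η : ℝ} (hη : (∫ t in (0 : ℝ)..T, |b t|) * T * ε < η)
    {x y : ℝ} (hux : 0 < u x) (hfb : ∀ t ∈ Icc 0 T, |f t| ≤ |b t| * (ε * u x))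
    (hx : x ∈ Icc 0 T) (hy : y ∈ Icc 0 T) : |u y / u x - 1| < η := by
  rw [div_sub_one hux.ne', abs_div, abs_of_pos hux, div_lt_iff₀ hux]
  calc |u y - u x| ≤ (∫ t in (0 : ℝ)..T, |b t|) * (ε * u x) * T :=
        h.abs_sub_le_of_abs_le_mul hf hB hT hb hfb hx hy
    _ = (∫ t in (0 : ℝ)..T, |b t|) * T * ε * u x := by ring
    _ < η * u x := mul_lt_mul_of_pos_right hη hux

/- At a maximum `M` of `u` on `[σ, τ]`, concavity gives `u ≥ δ M / (τ - σ)` on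
`[σ + δ, τ - δ]`. If this exceeds `s₀`, then `f ≥ b κ δ M / (τ - σ)` there, which is too large for
`u` to stay within `[0, M]`. -/
lemma mul_le_of_mul_le_source (h : IsSolOn T f u u') (hf : IntervalIntegrable f volume 0 T)
    {g b : ℝ → ℝ} {κ s₀ : ℝ} (hs₀ : 0 < s₀) (hg : ∀ s, s₀ ≤ s → κ * s ≤ g s)
    {σ τ δ : ℝ} (hσ : 0 ≤ σ) (hτ : τ ≤ T) (hδ : 0 < δ) (hδστ : σ + δ < τ - δ)
    (hb : IntervalIntegrable b volume 0 T) (hb₀ : ∀ᵐ t ∂volume.restrict (Icc σ τ), 0 ≤ b t)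
    (hκ : 0 ≤ κ) (hlarge : 2 * (τ - σ) < κ * δ ^ 2 * ∫ t in (σ + δ)..(τ - δ), b t)
    (hf₀ : ∀ᵐ t ∂volume.restrict (Icc σ τ), 0 ≤ f t)
    (hfb : ∀ᵐ t ∂volume.restrict (Icc σ τ), b t * g (u t) ≤ f t)
    (hu : ∀ t ∈ Icc σ τ, 0 ≤ u t) {x : ℝ} (hx : x ∈ Icc σ τ) : δ * u x ≤ s₀ * (τ - σ) := by
  have hsub : Icc σ τ ⊆ Icc 0 T := Icc_subset_Icc hσ hτ
  have hmid : Icc (σ + δ) (τ - δ) ⊆ Icc σ τ := Icc_subset_Icc (by linarith) (by linarith)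
  have hστ : 0 < τ - σ := by linarith
  obtain ⟨z, hz, hmax⟩ := isCompact_Icc.exists_isMaxOn ⟨x, hx⟩ (h.continuousOn.mono hsub)
  refine (mul_le_mul_of_nonneg_left (hmax hx) hδ.le).trans ?_
  by_contra! hlt
  set m := δ * u z / (τ - σ)
  have hm : s₀ < m := (lt_div_iff₀ hστ).mpr hlt
  have hum : ∀ t ∈ Icc (σ + δ) (τ - δ), m ≤ u t := fun t ht =>
    (div_le_iff₀' hστ).mpr (mul_le_mul_of_concaveOn_Icc (h.concaveOn hf hsub hf₀) hu hδ ht hz)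
  have hmem : ∀ {y}, y ∈ Icc (σ + δ) (τ - δ) → y ∈ Icc 0 T := fun hy => hsub (hmid hy)
  have hint : ∀ {k : ℝ → ℝ}, IntervalIntegrable k volume 0 T →
      IntervalIntegrable k volume (σ + δ) (τ - δ) := fun hk => intervalIntegrable_of_mem_Icc hk
    (hmem (left_mem_Icc.mpr hδστ.le)) (hmem (right_mem_Icc.mpr hδστ.le))
  have hsource : κ * m * ∫ t in (σ + δ)..(τ - δ), b t ≤ ∫ t in (σ + δ)..(τ - δ), f t :=
    mul_integral_le_integral_of_mul_comp_le hδστ.le (hint hb) (hint hf)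
      (ae_restrict_of_ae_restrict_of_subset hmid hb₀) hκ hg hm.le hum
      (ae_restrict_of_ae_restrict_of_subset hmid hfb)
  have hupper : δ * ∫ t in (σ + δ)..(τ - δ), f t ≤ 2 * u z :=
    h.mul_integral_le hf hsub hδ hδστ hf₀ fun t ht => ⟨hu t ht, hmax ht⟩
  have hum_eq : δ * u z = m * (τ - σ) := (div_mul_cancel₀ _ hστ.ne').symm
  have hcontra : m * (κ * δ ^ 2 * ∫ t in (σ + δ)..(τ - δ), b t) ≤ m * (2 * (τ - σ)) := by
    calc m * (κ * δ ^ 2 * ∫ t in (σ + δ)..(τ - δ), b t)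
        = δ * (δ * (κ * m * ∫ t in (σ + δ)..(τ - δ), b t)) := by ring
      _ ≤ δ * (2 * u z) := mul_le_mul_of_nonneg_left
          ((mul_le_mul_of_nonneg_left hsource hδ.le).trans hupper) hδ.le
      _ = m * (2 * (τ - σ)) := by linear_combination 2 * hum_eq
  exact hlarge.not_ge (le_of_mul_le_mul_left hcontra (hs₀.trans hm))

end IsSolOn

lemma RegOscAtZero.exists_forall_abs_sub_le {g : ℝ → ℝ} (hreg : RegOscAtZero g)
    (hg : ∀ s, 0 < s → 0 < g s) {ε : ℝ} (hε : 0 < ε) :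
    ∃ d > 0, ∃ η > 0, ∀ s ∈ Ioo 0 d, ∀ y, |y / s - 1| < η → |g y - g s| ≤ ε * g s := by
  obtain ⟨d, hd, η, hη, hosc⟩ := hreg ε hε
  refine ⟨d, hd, η, hη, fun s hs y hy => ?_⟩
  have hgs := hg s hs.1
  have := (hosc s (y / s) hs.1 hs.2 hy).le
  rwa [div_mul_cancel₀ _ hs.1.ne', div_sub_one hgs.ne', abs_div, abs_of_pos hgs,
    div_le_iff₀ hgs] at this

lemma exists_forall_eq_zero_of_le {T : ℝ} (hT : 0 < T) {g b : ℝ → ℝ} (hg : CondG1 g)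
    (hreg : RegOscAtZero g) (hg₀ : Tendsto (fun s => g s / s) (nhdsWithin 0 (Ioi 0)) (nhds 0))
    (hb : IntervalIntegrable b volume 0 T) (hb₀ : ∫ t in (0 : ℝ)..T, b t < 0)
    (B : BoundaryCondition) :
    ∃ r > 0, ∀ c ∈ Ioc (0 : ℝ) 1, ∀ u u' : ℝ → ℝ, IsSolOn T (fun t => c * (b t * g (u t))) u u' →
      B.Holds T u u' → (∀ x ∈ Icc 0 T, u x ∈ Icc 0 r) → ∀ x ∈ Icc 0 T, u x = 0 := by
  set I := ∫ t in (0 : ℝ)..T, |b t|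
  obtain ⟨ε, hε, hεI⟩ := exists_pos_mul_lt (neg_pos.mpr hb₀) I
  obtain ⟨d, hd, η, hη, hosc⟩ := hreg.exists_forall_abs_sub_le hg.2.2.2 hε
  obtain ⟨ε', hε', hε'I⟩ := exists_pos_mul_lt hη (I * T)
  obtain ⟨d', hd', hgε'⟩ := exists_forall_le_mul_of_tendsto_div hg.2.2.1 hg₀ hε'
  set r := min d d' / 2
  have hr : 0 < r := by positivity
  have hrd : r < d := (half_lt_self (by positivity)).trans_le (min_le_left d d')
  have hrd' : r < d' := (half_lt_self (by positivity)).trans_le (min_le_right d d')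
  refine ⟨r, hr, fun c hc u u' h hB hu => ?_⟩
  obtain ⟨z, hz, hmax⟩ := isCompact_Icc.exists_isMaxOn (nonempty_Icc.mpr hT.le) h.continuousOn
  have hgu : ContinuousOn (fun t => g (u t)) (Icc 0 T) :=
    hg.1.comp h.continuousOn fun t ht => (hu t ht).1
  have hbgu : IntervalIntegrable (fun t => b t * g (u t)) volume 0 T :=
    hb.mul_continuousOn (hgu.mono (uIcc_of_le hT.le).subset)
  suffices hz₀ : u z ≤ 0 from fun x hx => le_antisymm ((hmax hx).trans hz₀) (hu x hx).1
  by_contra! hz₀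
  have hsource : ∀ t ∈ Icc 0 T, |c * (b t * g (u t))| ≤ |b t| * (ε' * u z) := by
    intro t ht
    have hgt : 0 ≤ g (u t) := hg.2.1 _ (hu t ht).1
    have hgε : g (u t) ≤ ε' * u z := (hgε' _ (hu t ht).1 ((hu t ht).2.trans_lt hrd')).trans
      (mul_le_mul_of_nonneg_left (hmax ht) hε'.le)
    rw [abs_mul, abs_mul, abs_of_pos hc.1, abs_of_nonneg hgt]
    exact (mul_le_of_le_one_left (by positivity) hc.2).trans
      (mul_le_mul_of_nonneg_left hgε (abs_nonneg _))
  have hratio : ∀ t ∈ Icc 0 T, |u t / u z - 1| < η := fun t ht =>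
    h.abs_div_sub_one_lt (hbgu.const_mul c) hB hT hb hε'I hz₀ hsource hz ht
  have hneg : ∫ t in (0 : ℝ)..T, b t * g (u t) < 0 :=
    integral_mul_neg_of_abs_sub_le hT.le hb (by rwa [mul_comm]) hgu (hg.2.2.2 _ hz₀) fun t ht =>
      hosc (u z) ⟨hz₀, (hu z hz).2.trans_lt hrd⟩ (u t) (hratio t ht)
  have hzero := h.integral_eq_zero hB hT
  rw [intervalIntegral.integral_const_mul, mul_eq_zero_iff_left hc.1.ne'] at hzero
  exact hneg.ne hzero

section ExtendedTerm

/-- The right-hand side `b t * g s`, extended to negative `s` by `-s`, which forces solutions of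
the extended problem to be nonnegative. -/
def extendedTerm (b g : ℝ → ℝ) (t s : ℝ) : ℝ := b t * g (max s 0) + max (-s) 0

variable {b g : ℝ → ℝ}

lemma extendedTerm_of_nonneg (t : ℝ) {s : ℝ} (hs : 0 ≤ s) : extendedTerm b g t s = b t * g s := by
  simp [extendedTerm, hs]

lemma extendedTerm_of_neg (hg₀ : g 0 = 0) (t : ℝ) {s : ℝ} (hs : s < 0) :
    extendedTerm b g t s = -s := by
  simp [extendedTerm, hs.le, hg₀]

lemma continuous_comp_max_zero (hg : ContinuousOn g (Ici 0)) : Continuous fun s => g (max s 0) :=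
  hg.comp_continuous (by fun_prop) fun s => le_max_right s 0

lemma intervalIntegrable_extendedTerm {x y : ℝ} (hb : IntervalIntegrable b volume x y)
    (hg : ContinuousOn g (Ici 0)) {u : ℝ → ℝ} (hu : Continuous u) :
    IntervalIntegrable (fun t => extendedTerm b g t (u t)) volume x y :=
  (hb.mul_continuousOn ((continuous_comp_max_zero hg).comp hu).continuousOn).add
    (Continuous.intervalIntegrable (by fun_prop) x y)

lemma eq_zero_of_mul_add_integral_extendedTerm_eq {T : ℝ} (hT : 0 < T)
    (hg₀ : g 0 = 0) (hgpos : ∀ s, 0 < s → 0 < g s) (hb₀ : ∫ t in (0 : ℝ)..T, b t < 0) {c s : ℝ}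
    (hc : c ∈ Icc (0 : ℝ) 1) (hs : c * (s + ∫ t in (0 : ℝ)..T, extendedTerm b g t s) = s) :
    s = 0 := by
  rcases lt_trichotomy s 0 with hneg | hzero | hpos
  · simp only [extendedTerm_of_neg hg₀ _ hneg, intervalIntegral.integral_const, sub_zero,
      smul_eq_mul] at hs
    nlinarith [hc.1, hc.2, mul_nonneg hc.1 (mul_nonneg hT.le (neg_pos.mpr hneg).le)]
  · exact hzero
  · simp only [extendedTerm_of_nonneg _ hpos.le, intervalIntegral.integral_mul_const] at hs
    rcases hc.1.eq_or_lt with rfl | hc₀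
    · rw [← hs, zero_mul]
    · nlinarith [mul_neg_of_neg_of_pos hb₀ (hgpos s hpos), hc.2]

theorem IsSolOn.nonneg_of_extendedTerm {T : ℝ} {u u' w : ℝ → ℝ} {c : ℝ}
    (h : IsSolOn T (fun t => c * extendedTerm b g t (u t) + w t) u u')
    (hf : IntervalIntegrable (fun t => c * extendedTerm b g t (u t) + w t) volume 0 T)
    {B : BoundaryCondition} (hB : B.Holds T u u') (hT : 0 < T) (hg₀ : g 0 = 0) (hc : 0 < c)
    (hw : ∀ t ∈ Icc 0 T, 0 ≤ w t) {x : ℝ} (hx : x ∈ Icc 0 T) : 0 ≤ u x :=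
  h.nonneg hf hB hT (fun t ht hut => by
    rw [extendedTerm_of_neg hg₀ t hut]
    linarith [hw t ht, mul_pos hc (neg_pos.mpr hut)]) hx

end ExtendedTerm

section SuperpositionCompactness

variable {α F : Type*} [TopologicalSpace α] [CompactSpace α] [NormedAddCommGroup F]
  [NormedSpace ℝ F]

lemma exists_isCompact_mapsTo_comp {A : C(α, ℝ) →L[ℝ] F} (hA : IsCompactOperator A) (k : C(ℝ, ℝ))
    (R : ℝ) : ∃ K, IsCompact K ∧ MapsTo (fun u : C(α, ℝ) => A (k.comp u))
      (Metric.closedBall 0 R) K := by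
  obtain ⟨C, hC⟩ := (isCompact_closedBall (0 : ℝ) R).exists_bound_of_continuousOn
    k.continuous.continuousOn
  refine ⟨_, hA.isCompact_closure_image_closedBall (max C 0), fun u hu => subset_closure
    (mem_image_of_mem A ?_)⟩
  rw [mem_closedBall_zero_iff] at hu ⊢
  refine (ContinuousMap.norm_le _ (le_max_right C 0)).mpr fun x => (hC _ ?_).trans (le_max_left C 0)
  exact mem_closedBall_zero_iff.mpr ((u.norm_coe_le_norm x).trans hu)

open scoped Pointwise in
lemma exists_isCompact_mapsTo_comp_add_comp {A A' : C(α, ℝ) →L[ℝ] F} (hA : IsCompactOperator A)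
    (hA' : IsCompactOperator A') (k k' : C(ℝ, ℝ)) (R : ℝ) :
    ∃ K, IsCompact K ∧ MapsTo (fun u : C(α, ℝ) => A (k.comp u) + A' (k'.comp u))
      (Metric.closedBall 0 R) K := by
  obtain ⟨K, hK, hmaps⟩ := exists_isCompact_mapsTo_comp hA k R
  obtain ⟨K', hK', hmaps'⟩ := exists_isCompact_mapsTo_comp hA' k' R
  exact ⟨K + K', hK.add hK', fun u hu => add_mem_add (hmaps hu) (hmaps' hu)⟩

end SuperpositionCompactness

section CoincidenceOperators

variable {T : ℝ} (hT : 0 ≤ T) {b g : ℝ → ℝ} (hb : IntervalIntegrable b volume 0 T)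
  (hg : ContinuousOn g (Ici 0)) (B : BoundaryCondition)

/-- The operator `u ↦ ∫ extendedTerm b g t (u t)` on `C([0, T])`. -/
noncomputable def sourceIntegral (u : C(Icc 0 T, ℝ)) : ℝ :=
  weightedIntegral hT hb (.comp ⟨_, continuous_comp_max_zero hg⟩ u) +
    weightedIntegral hT (p := fun _ => 1) intervalIntegrable_const
      (.comp ⟨fun s => max (-s) 0, by fun_prop⟩ u)

/-- The operator sending `u` to `B.green T (fun t => extendedTerm b g t (u t))` on `C([0, T])`. -/
noncomputable def sourceGreen (u : C(Icc 0 T, ℝ)) : C(Icc 0 T, ℝ) :=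
  B.weightedGreen hT hb (.comp ⟨_, continuous_comp_max_zero hg⟩ u) +
    B.weightedGreen hT (p := fun _ => 1) intervalIntegrable_const
      (.comp ⟨fun s => max (-s) 0, by fun_prop⟩ u)

lemma sourceIntegral_eq (u : C(Icc 0 T, ℝ)) :
    sourceIntegral hT hb hg u = ∫ t in (0 : ℝ)..T, extendedTerm b g t (IccExtend hT u t) := by
  simp only [extendedTerm]
  rw [intervalIntegral.integral_add]
  · simp [sourceIntegral, weightedIntegral, IccExtend]
  · exact intervalIntegrable_mul_IccExtend hT hb (.comp ⟨_, continuous_comp_max_zero hg⟩ u)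
  · have := u.continuous.Icc_extend' (h := hT)
    exact Continuous.intervalIntegrable (by fun_prop) _ _

lemma sourceGreen_apply (u : C(Icc 0 T, ℝ)) (x : Icc 0 T) :
    sourceGreen hT hb hg B u x = B.green T (fun t => extendedTerm b g t (IccExtend hT u t)) x := by
  simp only [extendedTerm]
  rw [B.green_add _ _ x.2]
  · simp [sourceGreen, BoundaryCondition.weightedGreen, IccExtend]
  · exact intervalIntegrable_mul_IccExtend hT hb (.comp ⟨_, continuous_comp_max_zero hg⟩ u)
  · have := u.continuous.Icc_extend' (h := hT)
    exact Continuous.intervalIntegrable (by fun_prop) _ _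

lemma continuous_sourceIntegral : Continuous (sourceIntegral hT hb hg) :=
  ((weightedIntegral hT hb).continuous.comp (ContinuousMap.continuous_postcomp _)).add
    ((weightedIntegral hT _).continuous.comp (ContinuousMap.continuous_postcomp _))

lemma continuous_sourceGreen : Continuous (sourceGreen hT hb hg B) :=
  ((B.weightedGreen hT hb).continuous.comp (ContinuousMap.continuous_postcomp _)).add
    ((B.weightedGreen hT _).continuous.comp (ContinuousMap.continuous_postcomp _))

lemma exists_isCompact_mapsTo_sourceIntegral (R : ℝ) :
    ∃ K, IsCompact K ∧ MapsTo (sourceIntegral hT hb hg) (Metric.closedBall 0 R) K :=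
  exists_isCompact_mapsTo_comp_add_comp
    (isCompactOperator_of_locallyCompactSpace_dom _)
    (isCompactOperator_of_locallyCompactSpace_dom _) _ _ R

lemma exists_isCompact_mapsTo_sourceGreen (R : ℝ) :
    ∃ K, IsCompact K ∧ MapsTo (sourceGreen hT hb hg B) (Metric.closedBall 0 R) K :=
  exists_isCompact_mapsTo_comp_add_comp (B.isCompactOperator_weightedGreen hT hb)
    (B.isCompactOperator_weightedGreen hT _) _ _ R

end CoincidenceOperators

section FixedPointEquations

variable {T : ℝ} {B : BoundaryCondition}

lemma BoundaryCondition.Holds.congr {u u' v : ℝ → ℝ} (h : B.Holds T u u') (h0 : u 0 = v 0)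
    (hT : u T = v T) : B.Holds T v u' := by
  cases B
  case neumann => exact h
  case periodic => exact ⟨by rw [← h0, ← hT, h.1], h.2⟩

lemma IsSolOn.congr_left {f u u' v : ℝ → ℝ} (h : IsSolOn T f u u') (huv : EqOn v u (Icc 0 T)) :
    IsSolOn T f v u' :=
  ⟨fun x hx => (h.1 x hx).congr huv (huv hx), h.2⟩

lemma isSolOn_and_holds_of_forall_eq (hT : 0 < T) {f : ℝ → ℝ}
    (hf : IntervalIntegrable f volume 0 T) {u : C(Icc 0 T, ℝ)} {k : ℝ}
    (hk : k = 0 → ∫ t in (0 : ℝ)..T, f t = 0)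
    (hu : ∀ x : Icc 0 T, u ⟨0, left_mem_Icc.mpr hT.le⟩ + k + B.green T f x = u x) :
    IsSolOn T f (IccExtend hT.le u) (B.greenDeriv T f) ∧
      B.Holds T (IccExtend hT.le u) (B.greenDeriv T f) := by
  have hk₀ : k = 0 := by simpa using hu ⟨0, left_mem_Icc.mpr hT.le⟩
  have heq : EqOn (IccExtend hT.le u)
      (fun x => u ⟨0, left_mem_Icc.mpr hT.le⟩ + B.green T f x) (Icc 0 T) := fun x hx => by
    rw [IccExtend_of_mem hT.le u hx, ← hu ⟨x, hx⟩, hk₀, add_zero]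
  exact ⟨(B.isSolOn_const_add_green hT.le hf _).congr_left heq,
    (B.holds_const_add_green hT hf (hk hk₀) _).congr (heq (left_mem_Icc.mpr hT.le)).symm
      (heq (right_mem_Icc.mpr hT.le)).symm⟩

/-- The function `u` is a nonnegative solution of `u'' + f = 0` on `[0, T]` that satisfies the
boundary condition. -/
def BoundaryCondition.IsNonnegSol (B : BoundaryCondition) (T : ℝ) (f u : ℝ → ℝ) : Prop :=
  (∀ x ∈ Icc 0 T, 0 ≤ u x) ∧ ∃ u', IsSolOn T f u u' ∧ B.Holds T u u'

variable (hT : 0 < T) {b g w : ℝ → ℝ} (hb : IntervalIntegrable b volume 0 T)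
  (hg : ContinuousOn g (Ici 0)) (hw : IntervalIntegrable w volume 0 T)

/-- The operator sending `u` to the constant `u 0 + ∫ extendedTerm b g t (u t)` on `C([0, T])`.
The boundary value problem is `u = sourceConst u + sourceGreen u`, because evaluation at `0` makes
the source integral vanish. -/
noncomputable def sourceConst (hT : 0 ≤ T) (u : C(Icc 0 T, ℝ)) : C(Icc 0 T, ℝ) :=
  .const _ (u ⟨0, left_mem_Icc.mpr hT⟩ + sourceIntegral hT hb hg u)

/-- The term by which a source `w` enters the equation `u = sourceConst u + sourceGreen u`. -/
noncomputable def BoundaryCondition.forcing (B : BoundaryCondition) (hT : 0 ≤ T) :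
    C(Icc 0 T, ℝ) :=
  .const _ (weightedIntegral hT hw 1) + B.weightedGreen hT hw 1

lemma forcing_apply (x : Icc 0 T) :
    B.forcing hw hT.le x = (∫ t in (0 : ℝ)..T, w t) + B.green T w x := by
  simp [BoundaryCondition.forcing, weightedIntegral, BoundaryCondition.weightedGreen, IccExtend]

lemma continuous_sourceConst : Continuous (sourceConst hb hg hT.le) :=
  ContinuousMap.continuous_const'.comp
    ((continuous_eval_const _).add (continuous_sourceIntegral hT.le hb hg))

lemma exists_isCompact_mapsTo_sourceConst (R : ℝ) :
    ∃ K, IsCompact K ∧ MapsTo (sourceConst hb hg hT.le) (Metric.closedBall 0 R) K := by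
  obtain ⟨K, hK, hmaps⟩ := exists_isCompact_mapsTo_sourceIntegral hT.le hb hg R
  refine ⟨(fun p : ℝ × ℝ => ContinuousMap.const _ (p.1 + p.2)) '' (Metric.closedBall 0 R ×ˢ K),
    ((isCompact_closedBall 0 R).prod hK).image
      (ContinuousMap.continuous_const'.comp continuous_add), fun u hu => ?_⟩
  refine mem_image_of_mem _ (mk_mem_prod (mem_closedBall_zero_iff.mpr ?_) (hmaps hu))
  exact (u.norm_coe_le_norm _).trans (mem_closedBall_zero_iff.mp hu)

lemma smul_sourceConst_ne (hg₀ : g 0 = 0) (hgpos : ∀ s, 0 < s → 0 < g s)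
    (hb₀ : ∫ t in (0 : ℝ)..T, b t < 0) {c : ℝ} (hc : c ∈ Icc (0 : ℝ) 1) {u : C(Icc 0 T, ℝ)}
    (hu : u ≠ 0) : c • sourceConst hb hg hT.le u ≠ u := by
  intro h
  have hconst : ∀ x, u x = u ⟨0, left_mem_Icc.mpr hT.le⟩ := fun x => by
    rw [← h]
    simp [sourceConst]
  have hs : c * (u ⟨0, left_mem_Icc.mpr hT.le⟩ + sourceIntegral hT.le hb hg u) =
      u ⟨0, left_mem_Icc.mpr hT.le⟩ := DFunLike.congr_fun h _
  simp only [sourceIntegral_eq, IccExtend, Function.comp_apply, hconst] at hs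
  have hzero := eq_zero_of_mul_add_integral_extendedTerm_eq hT hg₀ hgpos hb₀ hc hs
  exact hu (ContinuousMap.ext fun x => (hconst x).trans hzero)

lemma isNonnegSol_of_sourceConst_add_smul_sourceGreen_eq (hg₀ : g 0 = 0) {c : ℝ} (hc : 0 < c)
    {u : C(Icc 0 T, ℝ)} (hu : sourceConst hb hg hT.le u + c • sourceGreen hT.le hb hg B u = u) :
    B.IsNonnegSol T (fun t => c * (b t * g (IccExtend hT.le u t))) (IccExtend hT.le u) := by
  have hf := (intervalIntegrable_extendedTerm hb hg
    (u.continuous.Icc_extend' (h := hT.le))).const_mul c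
  obtain ⟨hsol, hB⟩ := isSolOn_and_holds_of_forall_eq (B := B) hT hf
    (u := u) (k := sourceIntegral hT.le hb hg u)
    (fun h => by
      rw [intervalIntegral.integral_const_mul, ← sourceIntegral_eq hT.le hb hg, h, mul_zero])
    fun x => by
      rw [BoundaryCondition.green_const_mul, ← sourceGreen_apply hT.le hb hg]
      exact DFunLike.congr_fun hu x
  have hnonneg : ∀ x ∈ Icc 0 T, 0 ≤ IccExtend hT.le u x := fun x hx =>
    IsSolOn.nonneg_of_extendedTerm (w := fun _ => 0) (by simpa using hsol) (by simpa using hf) hB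
      hT hg₀ hc (fun _ _ => le_rfl) hx
  exact ⟨hnonneg, _, hsol.congr fun t ht => by
    simp only [extendedTerm_of_nonneg t (hnonneg t ht)], hB⟩

lemma isNonnegSol_of_sourceConst_add_sourceGreen_add_smul_forcing_eq (hg₀ : g 0 = 0) {α : ℝ}
    (hα : 0 ≤ α) (hw₀ : ∀ t, 0 ≤ w t) {u : C(Icc 0 T, ℝ)}
    (hu : sourceConst hb hg hT.le u + sourceGreen hT.le hb hg B u + α • B.forcing hw hT.le = u) :
    B.IsNonnegSol T (fun t => b t * g (IccExtend hT.le u t) + α * w t) (IccExtend hT.le u) := by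
  have hext := intervalIntegrable_extendedTerm hb hg (u.continuous.Icc_extend' (h := hT.le))
  have hf := hext.add (hw.const_mul α)
  obtain ⟨hsol, hB⟩ := isSolOn_and_holds_of_forall_eq (B := B) hT hf
    (u := u) (k := sourceIntegral hT.le hb hg u + α * ∫ t in (0 : ℝ)..T, w t)
    (fun h => by
      rw [intervalIntegral.integral_add hext (hw.const_mul α),
        intervalIntegral.integral_const_mul, ← sourceIntegral_eq hT.le hb hg, h])
    fun x => by
      have := DFunLike.congr_fun hu x
      simp only [ContinuousMap.add_apply, ContinuousMap.smul_apply, smul_eq_mul, sourceConst,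
        ContinuousMap.const_apply, forcing_apply hT hw] at this
      rw [B.green_add hext (hw.const_mul α) x.2, BoundaryCondition.green_const_mul,
        ← sourceGreen_apply hT.le hb hg]
      linarith
  have hnonneg : ∀ x ∈ Icc 0 T, 0 ≤ IccExtend hT.le u x := fun x hx =>
    IsSolOn.nonneg_of_extendedTerm (c := 1) (w := fun t => α * w t) (by simpa using hsol)
      (by simpa using hf) hB hT hg₀ one_pos (fun t _ => mul_nonneg hα (hw₀ t)) hx
  exact ⟨hnonneg, _, hsol.congr fun t ht => by
    simp only [extendedTerm_of_nonneg t (hnonneg t ht)], hB⟩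

include hb hg hw in
/- By `exists_fixedPoint_of_expansion`: the degree of `u ↦ sourceConst u + sourceGreen u` is nonzero
on the small ball because `∫ b < 0`, and zero on the large ball. -/
theorem exists_isNonnegSol_of_expansion (hg₀ : g 0 = 0) (hgpos : ∀ s, 0 < s → 0 < g s)
    (hb₀ : ∫ t in (0 : ℝ)..T, b t < 0) (hw₀ : ∀ t, 0 ≤ w t) {r R α₀ : ℝ} (hr : 0 < r) (hrR : r < R)
    (hα₀ : 0 ≤ α₀)
    (hinner : ∀ c ∈ Ioc (0 : ℝ) 1, ∀ u : C(Icc 0 T, ℝ),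
      B.IsNonnegSol T (fun t => c * (b t * g (IccExtend hT.le u t))) (IccExtend hT.le u) → ‖u‖ ≠ r)
    (houter : ∀ α : ℝ, 0 ≤ α → ∀ u : C(Icc 0 T, ℝ),
      B.IsNonnegSol T (fun t => b t * g (IccExtend hT.le u t) + α * w t) (IccExtend hT.le u) →
        ‖u‖ ≠ R)
    (hball : ∀ u : C(Icc 0 T, ℝ),
      B.IsNonnegSol T (fun t => b t * g (IccExtend hT.le u t) + α₀ * w t) (IccExtend hT.le u) →
        R < ‖u‖) :
    ∃ u : C(Icc 0 T, ℝ), r < ‖u‖ ∧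
      B.IsNonnegSol T (fun t => b t * g (IccExtend hT.le u t)) (IccExtend hT.le u) := by
  obtain ⟨K, hK, hmaps⟩ := exists_isCompact_mapsTo_sourceConst hT hb hg R
  obtain ⟨L, hL, hmaps'⟩ := exists_isCompact_mapsTo_sourceGreen hT.le hb hg B R
  have hsol := fun α hα u => isNonnegSol_of_sourceConst_add_sourceGreen_add_smul_forcing_eq
    (B := B) hT hb hg hw hg₀ (α := α) hα hw₀ (u := u)
  obtain ⟨u, hru, -, hu⟩ := exists_fixedPoint_of_expansion hr hrR
    (continuous_sourceConst hT hb hg).continuousOn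
    (continuous_sourceGreen hT.le hb hg B).continuousOn hK hmaps hL hmaps' hα₀
    (e := B.forcing hw hT.le)
    (fun c hc u hur => smul_sourceConst_ne hT hb hg hg₀ hgpos hb₀ hc
      (norm_pos_iff.mp (hur ▸ hr)))
    (fun c hc u hur hu => hinner c hc u
      (isNonnegSol_of_sourceConst_add_smul_sourceGreen_eq hT hb hg hg₀ hc.1 hu) hur)
    (fun α hα u huR hu => houter α hα u (hsol α hα u hu) huR)
    (fun u huR hu => (hball u (hsol α₀ hα₀ u hu)).not_ge huR)
  exact ⟨u, hru, by simpa using hsol 0 le_rfl u (by rwa [zero_smul, add_zero])⟩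

end FixedPointEquations

section Existence

variable {ι : Type*} {T κ : ℝ} {b g : ℝ → ℝ} {σ τ δ : ι → ℝ}

/-- The weight `b` on `[0, T]` is nonnegative on the intervals `[σ i, τ i]`, nonpositive elsewhere,
and so large on each `[σ i + δ i, τ i - δ i]` that a nonlinearity growing at least like `κ s`
confines all nonnegative solutions there. -/
structure IsLargeOnHumps (T κ : ℝ) (b : ℝ → ℝ) (σ τ δ : ι → ℝ) : Prop where
  nonneg_left : ∀ i, 0 ≤ σ i
  right_le : ∀ i, τ i ≤ T
  margin_pos : ∀ i, 0 < δ i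
  add_lt_sub : ∀ i, σ i + δ i < τ i - δ i
  weight_nonneg : ∀ i, ∀ᵐ t ∂volume.restrict (Icc (σ i) (τ i)), 0 ≤ b t
  weight_nonpos : ∀ᵐ t ∂volume.restrict (Icc 0 T \ ⋃ i, Icc (σ i) (τ i)), b t ≤ 0
  large : ∀ i, 2 * (τ i - σ i) < κ * δ i ^ 2 * ∫ t in (σ i + δ i)..(τ i - δ i), b t

/-- The indicator function of `⋃ i, [σ i, τ i]`. -/
noncomputable def humpIndicator (σ τ : ι → ℝ) : ℝ → ℝ :=
  (⋃ i, Icc (σ i) (τ i)).indicator 1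

lemma humpIndicator_nonneg (t : ℝ) : 0 ≤ humpIndicator σ τ t :=
  indicator_nonneg (fun _ _ => zero_le_one) t

lemma humpIndicator_of_mem {i : ι} {t : ℝ} (ht : t ∈ Icc (σ i) (τ i)) : humpIndicator σ τ t = 1 :=
  indicator_of_mem (mem_iUnion_of_mem i ht) 1

lemma intervalIntegrable_humpIndicator [Countable ι] {x y : ℝ} :
    IntervalIntegrable (humpIndicator σ τ) volume x y :=
  intervalIntegrable_iff.mpr <| (intervalIntegrable_iff.mp intervalIntegrable_const).indicator <|
    MeasurableSet.iUnion fun _ => measurableSet_Icc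

namespace IsLargeOnHumps

variable {u u' : ℝ → ℝ} {α : ℝ} (hw : IsLargeOnHumps T κ b σ τ δ)

include hw

lemma Icc_subset (i : ι) : Icc (σ i) (τ i) ⊆ Icc 0 T :=
  Icc_subset_Icc (hw.nonneg_left i) (hw.right_le i)

lemma le_source (hg : ∀ s, 0 ≤ s → 0 ≤ g s) (hu : ∀ x ∈ Icc 0 T, 0 ≤ u x) (i : ι) :
    ∀ᵐ t ∂volume.restrict (Icc (σ i) (τ i)), α ≤ b t * g (u t) + α * humpIndicator σ τ t := by
  filter_upwards [hw.weight_nonneg i, ae_restrict_mem measurableSet_Icc] with t hbt ht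
  rw [humpIndicator_of_mem ht, mul_one]
  exact le_add_of_nonneg_left (mul_nonneg hbt (hg _ (hu t (hw.Icc_subset i ht))))

lemma source_nonpos [Countable ι] (hg : ∀ s, 0 ≤ s → 0 ≤ g s) (hu : ∀ x ∈ Icc 0 T, 0 ≤ u x) :
    ∀ᵐ t ∂volume.restrict (Icc 0 T), t ∉ ⋃ i, Icc (σ i) (τ i) →
      b t * g (u t) + α * humpIndicator σ τ t ≤ 0 := by
  have hmeas : MeasurableSet (⋃ i, Icc (σ i) (τ i)) := .iUnion fun _ => measurableSet_Icc
  have hnonpos := hw.weight_nonpos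
  rw [ae_restrict_iff' (measurableSet_Icc.diff hmeas)] at hnonpos
  filter_upwards [ae_restrict_of_ae hnonpos, ae_restrict_mem measurableSet_Icc] with t hbt ht htJ
  rw [humpIndicator, indicator_of_notMem htJ, mul_zero, add_zero]
  exact mul_nonpos_of_nonpos_of_nonneg (hbt ⟨ht, htJ⟩) (hg _ (hu t ht))

lemma le_sum [Fintype ι] [Nonempty ι] (hb : IntervalIntegrable b volume 0 T)
    (hκ : 0 < κ) {s₀ : ℝ} (hs₀ : 0 < s₀) (hgκ : ∀ s, s₀ ≤ s → κ * s ≤ g s)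
    (hg : ∀ s, 0 ≤ s → 0 ≤ g s) (hα : 0 ≤ α)
    (h : IsSolOn T (fun t => b t * g (u t) + α * humpIndicator σ τ t) u u')
    (hf : IntervalIntegrable (fun t => b t * g (u t) + α * humpIndicator σ τ t) volume 0 T)
    {B : BoundaryCondition} (hB : B.Holds T u u') (hu : ∀ x ∈ Icc 0 T, 0 ≤ u x) {x : ℝ}
    (hx : x ∈ Icc 0 T) : u x ≤ ∑ i, s₀ * (τ i - σ i) / δ i := by
  have hhump : ∀ i, ∀ y ∈ Icc (σ i) (τ i), u y ≤ ∑ i, s₀ * (τ i - σ i) / δ i := by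
    intro i y hy
    have hfb : ∀ t, b t * g (u t) ≤ b t * g (u t) + α * humpIndicator σ τ t := fun t =>
      le_add_of_nonneg_right (mul_nonneg hα (humpIndicator_nonneg t))
    have := h.mul_le_of_mul_le_source hf hs₀ hgκ (hw.nonneg_left i) (hw.right_le i)
      (hw.margin_pos i) (hw.add_lt_sub i) hb (hw.weight_nonneg i) hκ.le (hw.large i)
      ((hw.le_source hg hu i).mono fun t => hα.trans) (ae_of_all _ hfb)
      (fun t ht => hu t (hw.Icc_subset i ht)) hy
    refine ((le_div_iff₀' (hw.margin_pos i)).mpr this).trans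
      (Finset.single_le_sum (f := fun i => s₀ * (τ i - σ i) / δ i) (fun j _ => ?_)
        (Finset.mem_univ i))
    have := hw.add_lt_sub j
    have := hw.margin_pos j
    exact div_nonneg (mul_nonneg hs₀.le (by linarith)) (hw.margin_pos j).le
  obtain ⟨i⟩ := ‹Nonempty ι›
  have hσ : σ i ∈ Icc (σ i) (τ i) := ⟨le_rfl, by linarith [hw.add_lt_sub i, hw.margin_pos i]⟩
  refine h.le_of_exists_le hf hB ?_ (hw.Icc_subset i hσ) (hhump i _ hσ) hx
  filter_upwards [hw.source_nonpos hg hu] with t ht hMt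
  exact ht fun hmem => let ⟨j, hj⟩ := mem_iUnion.mp hmem; hMt.not_ge (hhump j t hj)

lemma mul_le (hg : ∀ s, 0 ≤ s → 0 ≤ g s) (hα : 0 ≤ α)
    (h : IsSolOn T (fun t => b t * g (u t) + α * humpIndicator σ τ t) u u')
    (hf : IntervalIntegrable (fun t => b t * g (u t) + α * humpIndicator σ τ t) volume 0 T)
    {R : ℝ} (hu : ∀ x ∈ Icc 0 T, 0 ≤ u x ∧ u x ≤ R) (i : ι) :
    α * (δ i * (τ i - σ i - 2 * δ i)) ≤ 2 * R := by
  have hlt := hw.add_lt_sub i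
  have hδ := hw.margin_pos i
  have hsub : Icc (σ i + δ i) (τ i - δ i) ⊆ Icc (σ i) (τ i) :=
    Icc_subset_Icc (by linarith) (by linarith)
  have hα_le := hw.le_source (α := α) hg (fun x hx => (hu x hx).1) i
  have hint : α * (τ i - σ i - 2 * δ i) ≤
      ∫ t in (σ i + δ i)..(τ i - δ i), (b t * g (u t) + α * humpIndicator σ τ t) := by
    calc α * (τ i - σ i - 2 * δ i) = ∫ _ in (σ i + δ i)..(τ i - δ i), α := by
          rw [intervalIntegral.integral_const, smul_eq_mul]
          ring
      _ ≤ _ := intervalIntegral.integral_mono_ae_restrict hlt.le intervalIntegrable_const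
          (intervalIntegrable_of_mem_Icc hf
            (hw.Icc_subset i (hsub (left_mem_Icc.mpr hlt.le)))
            (hw.Icc_subset i (hsub (right_mem_Icc.mpr hlt.le))))
          (ae_restrict_of_ae_restrict_of_subset hsub hα_le)
  calc α * (δ i * (τ i - σ i - 2 * δ i)) = δ i * (α * (τ i - σ i - 2 * δ i)) := by ring
    _ ≤ δ i * _ := mul_le_mul_of_nonneg_left hint hδ.le
    _ ≤ 2 * R := h.mul_integral_le hf (hw.Icc_subset i) hδ hlt (hα_le.mono fun t => hα.trans)
        fun x hx => hu x (hw.Icc_subset i hx)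

end IsLargeOnHumps

lemma norm_le_iff_forall_IccExtend_le (hT : 0 ≤ T) {u : C(Icc 0 T, ℝ)}
    (hu : ∀ x ∈ Icc 0 T, 0 ≤ IccExtend hT u x) {R : ℝ} (hR : 0 ≤ R) :
    ‖u‖ ≤ R ↔ ∀ x ∈ Icc 0 T, IccExtend hT u x ≤ R := by
  rw [ContinuousMap.norm_le u hR]
  refine ⟨fun h x hx => ?_, fun h x => ?_⟩
  · rw [IccExtend_of_mem hT u hx]
    exact (le_abs_self _).trans (h _)
  · have := hu x x.2
    have := h x x.2
    rw [IccExtend_val] at *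
    rwa [Real.norm_of_nonneg ‹_›]

lemma intervalIntegrable_mul_comp_IccExtend (hT : 0 ≤ T) (hb : IntervalIntegrable b volume 0 T)
    (hg : ContinuousOn g (Ici 0)) {u : C(Icc 0 T, ℝ)} (hu : ∀ x ∈ Icc 0 T, 0 ≤ IccExtend hT u x) :
    IntervalIntegrable (fun t => b t * g (IccExtend hT u t)) volume 0 T :=
  hb.mul_continuousOn (hg.comp u.continuous.Icc_extend'.continuousOn (by rwa [uIcc_of_le hT]))

theorem IsLargeOnHumps.exists_isNonnegSol [Finite ι] [Nonempty ι]
    (hw : IsLargeOnHumps T κ b σ τ δ) (hT : 0 < T) (hb : IntervalIntegrable b volume 0 T)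
    (hb₀ : ∫ t in (0 : ℝ)..T, b t < 0) (hκ : 0 < κ) {s₀ : ℝ} (hs₀ : 0 < s₀)
    (hgκ : ∀ s, s₀ ≤ s → κ * s ≤ g s) (hg : CondG1 g) (hreg : RegOscAtZero g)
    (hg₀ : Tendsto (fun s => g s / s) (nhdsWithin 0 (Ioi 0)) (nhds 0)) (B : BoundaryCondition) :
    ∃ u : C(Icc 0 T, ℝ), u ≠ 0 ∧
      B.IsNonnegSol T (fun t => b t * g (IccExtend hT.le u t)) (IccExtend hT.le u) := by
  cases nonempty_fintype ι
  obtain ⟨r, hr, hsmall⟩ := exists_forall_eq_zero_of_le hT hg hreg hg₀ hb hb₀ B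
  obtain ⟨i⟩ := ‹Nonempty ι›
  set M := ∑ i, s₀ * (τ i - σ i) / δ i
  set R := max M r + 1
  have hrR : r < R := (le_max_right M r).trans_lt (lt_add_one _)
  have hgap : 0 < δ i * (τ i - σ i - 2 * δ i) :=
    mul_pos (hw.margin_pos i) (by linarith [hw.add_lt_sub i])
  have hα₀ : 0 ≤ (2 * R + 1) / (δ i * (τ i - σ i - 2 * δ i)) :=
    div_nonneg (by linarith) hgap.le
  have hint : ∀ (α : ℝ) (u : C(Icc 0 T, ℝ)), (∀ x ∈ Icc 0 T, 0 ≤ IccExtend hT.le u x) →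
      IntervalIntegrable (fun t => b t * g (IccExtend hT.le u t) + α * humpIndicator σ τ t)
        volume 0 T := fun α u hu =>
    (intervalIntegrable_mul_comp_IccExtend hT.le hb hg.1 hu).add
      (intervalIntegrable_humpIndicator.const_mul α)
  refine (exists_isNonnegSol_of_expansion (B := B) hT hb hg.1
    (intervalIntegrable_humpIndicator (σ := σ) (τ := τ)) hg.2.2.1 hg.2.2.2 hb₀
    humpIndicator_nonneg hr hrR hα₀ ?_ ?_ ?_).imp
    fun u ⟨hru, hu⟩ => ⟨norm_pos_iff.mp (hr.trans hru), hu⟩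
  · rintro c hc u ⟨hu, u', h, hB⟩ hur
    have hle := (norm_le_iff_forall_IccExtend_le hT.le hu hr.le).mp hur.le
    have hzero := hsmall c hc _ u' h hB fun x hx => ⟨hu x hx, hle x hx⟩
    have := (norm_le_iff_forall_IccExtend_le hT.le hu le_rfl).mpr fun x hx => (hzero x hx).le
    exact hr.not_ge (hur ▸ this)
  · rintro α hα u ⟨hu, u', h, hB⟩ huR
    have hle : ‖u‖ ≤ max M r := (norm_le_iff_forall_IccExtend_le hT.le hu (hr.le.trans
      (le_max_right M r))).mpr fun x hx => (hw.le_sum hb hκ hs₀ hgκ hg.2.1 hα h (hint α u hu) hB hu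
        hx).trans (le_max_left M r)
    exact (lt_add_one (max M r)).not_ge (huR.ge.trans hle)
  · rintro u ⟨hu, u', h, -⟩
    by_contra! huR
    have hle := (norm_le_iff_forall_IccExtend_le hT.le hu (hr.trans hrR).le).mp huR
    have := hw.mul_le hg.2.1 hα₀ h (hint _ u hu) (fun x hx => ⟨hu x hx, hle x hx⟩) i
    rw [div_mul_cancel₀ _ hgap.ne'] at this
    linarith

theorem IsLargeOnHumps.exists_pos_solution [Finite ι] [Nonempty ι]
    (hw : IsLargeOnHumps T κ b σ τ δ) (hT : 0 < T) (hb : IntervalIntegrable b volume 0 T)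
    (hb₀ : ∫ t in (0 : ℝ)..T, b t < 0) (hκ : 0 < κ) {s₀ : ℝ} (hs₀ : 0 < s₀)
    (hgκ : ∀ s, s₀ ≤ s → κ * s ≤ g s) (hg : CondG1 g) (hreg : RegOscAtZero g)
    (hg₀ : Tendsto (fun s => g s / s) (nhdsWithin 0 (Ioi 0)) (nhds 0)) (B : BoundaryCondition) :
    ∃ u u', IsSolOn T (fun t => b t * g (u t)) u u' ∧ (∀ x ∈ Icc 0 T, 0 < u x) ∧
      B.Holds T u u' := by
  obtain ⟨u, hu_ne, hu, u', h, hB⟩ := hw.exists_isNonnegSol hT hb hb₀ hκ hs₀ hgκ hg hreg hg₀ B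
  obtain ⟨C, hC⟩ := exists_forall_le_mul_of_mem_Icc hg.1 hg.2.2.1 hg₀ ‖u‖
  have hle := (norm_le_iff_forall_IccExtend_le hT.le hu (norm_nonneg u)).mp le_rfl
  have hf := intervalIntegrable_mul_comp_IccExtend hT.le hb hg.1 hu
  have hfb : ∀ t ∈ Icc 0 T, |b t * g (IccExtend hT.le u t)| ≤
      |b t * C| * IccExtend hT.le u t := fun t ht => by
    rw [abs_mul, abs_mul, abs_of_nonneg (hg.2.1 _ (hu t ht)), mul_assoc]
    refine mul_le_mul_of_nonneg_left ((hC _ ⟨hu t ht, hle t ht⟩).trans ?_) (abs_nonneg _)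
    exact mul_le_mul_of_nonneg_right (le_abs_self C) (hu t ht)
  obtain ⟨y, hy, huy⟩ : ∃ y ∈ Icc 0 T, 0 < IccExtend hT.le u y := by
    by_contra! hnonpos
    exact hu_ne (norm_le_zero_iff.mp
      ((norm_le_iff_forall_IccExtend_le hT.le hu le_rfl).mpr hnonpos))
  exact ⟨_, u', h, fun x hx => h.pos_of_exists_pos hf hB hT hu (hb.mul_const C) hfb hy huy hx, hB⟩

lemma CondA1.exists_forall_isLargeOnHumps {a : ℝ → ℝ} (ha₁ : CondA1 T a)
    (ha : IntervalIntegrable a volume 0 T) (hκ : 0 < κ) :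
    ∃ νs > 0, ∃ m > 0, ∃ σ τ δ : Fin m → ℝ,
      ∀ ν, νs < ν → IsLargeOnHumps T κ (fun t => ν * a t) σ τ δ := by
  obtain ⟨m, σ, τ, hm, hστ, -, hnonneg, hne, hnonpos⟩ := ha₁
  have hIcc : ∀ i, σ i ∈ Icc 0 T ∧ τ i ∈ Icc 0 T := fun i =>
    have ⟨h₀, h, hT⟩ := hστ i
    ⟨⟨h₀, h.trans hT⟩, ⟨h₀.trans h, hT⟩⟩
  choose δ hδ hlt hpos using fun i => exists_integral_pos_of_not_ae_eq_zero (hστ i).2.1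
    (intervalIntegrable_of_mem_Icc ha (hIcc i).1 (hIcc i).2) (hnonneg i) (hne i)
  set A : Fin m → ℝ := fun i => κ * δ i ^ 2 * ∫ t in (σ i + δ i)..(τ i - δ i), a t
  have hA : ∀ i, 0 < A i := fun i => mul_pos (mul_pos hκ (pow_pos (hδ i) 2)) (hpos i)
  have hquot : ∀ i, 0 ≤ 2 * (τ i - σ i) / A i := fun i =>
    div_nonneg (mul_nonneg zero_le_two (sub_nonneg.mpr (hστ i).2.1)) (hA i).le
  have hsum : 0 ≤ ∑ i, 2 * (τ i - σ i) / A i := Finset.sum_nonneg fun i _ => hquot i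
  refine ⟨1 + ∑ i, 2 * (τ i - σ i) / A i, by linarith, m, hm, σ, τ, δ, fun ν hν => ?_⟩
  have hν₀ : 0 < ν := by linarith
  exact
    { nonneg_left := fun i => (hστ i).1
      right_le := fun i => (hστ i).2.2
      margin_pos := hδ
      add_lt_sub := hlt
      weight_nonneg := fun i => (hnonneg i).mono fun t => mul_nonneg hν₀.le
      weight_nonpos := hnonpos.mono fun t => mul_nonpos_of_nonneg_of_nonpos hν₀.le
      large := fun i => by
        have hle := Finset.single_le_sum (fun i _ => hquot i) (Finset.mem_univ i)
        have : 2 * (τ i - σ i) < ν * A i := (div_lt_iff₀ (hA i)).mp (by linarith)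
        rw [intervalIntegral.integral_const_mul]
        linarith }

end Existence

/-- Corollary: under (g1), regular oscillation at zero, `g(s)/s → 0` as `s → 0⁺`,
`liminf_{s→+∞} g(s)/s > 0`, (a1) and (a2), there is `ν* > 0` such that for every
`ν > ν*` the equation `u'' + ν a(x) g(u) = 0` has a positive Neumann solution and
a positive periodic solution. -/
theorem statement_4
    (T : ℝ) (hT : 0 < T)
    (g : ℝ → ℝ) (hg1 : CondG1 g) (hreg : RegOscAtZero g)
    (hg0 : Tendsto (fun s => g s / s) (nhdsWithin 0 (Ioi 0)) (nhds 0))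
    (hginf : (0 : EReal) < GrowthLiminf g)
    (a : ℝ → ℝ) (ha : IntervalIntegrable a volume 0 T)
    (ha1 : CondA1 T a)
    (ha2 : (∫ x in (0:ℝ)..T, a x) < 0) :
    ∃ νs : ℝ, 0 < νs ∧ ∀ ν : ℝ, νs < ν →
      PosSolNeumann T (fun t => ν * a t) g ∧ PosSolPeriodic T (fun t => ν * a t) g := by
  obtain ⟨κ, hκ, s₀, hs₀, hgκ⟩ := exists_forall_mul_le_of_growthLiminf_pos hginf
  obtain ⟨νs, hνs, m, hm, σ, τ, δ, hlarge⟩ := ha1.exists_forall_isLargeOnHumps ha hκ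
  have : Nonempty (Fin m) := ⟨⟨0, hm⟩⟩
  refine ⟨νs, hνs, fun ν hν => ?_⟩
  have hneg : ∫ x in (0 : ℝ)..T, ν * a x < 0 := by
    rw [intervalIntegral.integral_const_mul]
    exact mul_neg_of_pos_of_neg (hνs.trans hν) ha2
  have hsol := (hlarge ν hν).exists_pos_solution hT (ha.const_mul ν) hneg hκ hs₀ hgκ hg1 hreg hg0
  exact ⟨hsol .neumann, hsol .periodic⟩
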